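/- arXiv:2502.11323 — 8 statements merged into one kernel-verified Lean document; each statement's English description precedes it below -/
import Mathlib

section
/- Assume at least one label equals +1, at least one label equals −1, and the data are linearly separable. Then for every τ > 0 the margin-rebalanced SVM problem — maximize M_τ(β,β₀) := min_{1≤i≤n} ỹ_i(⟨x_i,β⟩+β₀) over all β ∈ ℝ^d with ‖β‖₂ ≤ 1 and β₀ ∈ ℝ — has exactly one maximizer (β̂(τ), β̂₀(τ)), and its optimal value κ̂(τ) := M_τ(β̂(τ), β̂₀(τ)) is strictly positive. -/
open scoped RealInnerProductSpace

/-- For linearly separable data with both labels present, for every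
`τ > 0` the margin-rebalanced SVM problem has exactly one maximizer over
`{β : ‖β‖ ≤ 1} × ℝ`, and the optimal value is strictly positive. -/
theorem stmt_0
    (n d : ℕ) (hn : 1 ≤ n) (hd : 1 ≤ d)
    (x : Fin n → EuclideanSpace ℝ (Fin d))
    (y : Fin n → ℝ) (hy : ∀ i, y i = 1 ∨ y i = -1)
    (hplus : ∃ i, y i = 1) (hminus : ∃ i, y i = -1)
    (hsep : ∃ (β : EuclideanSpace ℝ (Fin d)) (β₀ : ℝ),
      ∀ i, 0 < y i * (⟪x i, β⟫ + β₀))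
    (τ : ℝ) (hτ : 0 < τ)
    (ytil : Fin n → ℝ)
    (hytil1 : ∀ i, y i = 1 → ytil i = 1 / τ)
    (hytil2 : ∀ i, y i = -1 → ytil i = -1)
    (M : EuclideanSpace ℝ (Fin d) → ℝ → ℝ)
    (hM : ∀ β β₀, M β β₀ =
      (Finset.univ : Finset (Fin n)).inf' ⟨hplus.choose, Finset.mem_univ hplus.choose⟩
        fun i => ytil i * (⟪x i, β⟫ + β₀)) :
    (∃! p : EuclideanSpace ℝ (Fin d) × ℝ,
      ‖p.1‖ ≤ 1 ∧
        ∀ q : EuclideanSpace ℝ (Fin d) × ℝ, ‖q.1‖ ≤ 1 → M q.1 q.2 ≤ M p.1 p.2) ∧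
    ∀ p : EuclideanSpace ℝ (Fin d) × ℝ,
      ‖p.1‖ ≤ 1 →
      (∀ q : EuclideanSpace ℝ (Fin d) × ℝ, ‖q.1‖ ≤ 1 → M q.1 q.2 ≤ M p.1 p.2) →
      0 < M p.1 p.2 := by
  have hle : ∀ (t : ℝ) β β₀, t ≤ M β β₀ ↔ ∀ i, t ≤ ytil i * (⟪x i, β⟫ + β₀) := by
    intro t β β₀
    rw [hM]; exact (Finset.le_inf'_iff _ _).trans (by simp)
  have hlt : ∀ (t : ℝ) β β₀, t < M β β₀ ↔ ∀ i, t < ytil i * (⟪x i, β⟫ + β₀) := by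
    intro t β β₀
    rw [hM]; exact (Finset.lt_inf'_iff _).trans (by simp)
  -- a feasible point of positive margin
  obtain ⟨q, hq1, hq⟩ : ∃ q : EuclideanSpace ℝ (Fin d) × ℝ, ‖q.1‖ ≤ 1 ∧ 0 < M q.1 q.2 := by
    obtain ⟨β, β₀, h⟩ := hsep
    have hc : 0 < 1 + ‖β‖ := by positivity
    refine ⟨((1 + ‖β‖)⁻¹ • β, (1 + ‖β‖)⁻¹ * β₀), ?_, ?_⟩
    · simp only [norm_smul, norm_inv, Real.norm_eq_abs, abs_of_pos hc]
      rw [inv_mul_le_iff₀ hc]; linarith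
    · rw [hlt]
      intro i
      simp only [inner_smul_right]
      rw [← mul_add, mul_left_comm]
      refine mul_pos (inv_pos.2 hc) ?_
      have := h i
      rcases hy i with hi | hi
      · rw [hytil1 i hi]; rw [hi] at this
        exact mul_pos (by positivity) (by linarith)
      · rw [hytil2 i hi]; rw [hi] at this
        exact this
  have hpos : ∀ p : EuclideanSpace ℝ (Fin d) × ℝ,
      (∀ q : EuclideanSpace ℝ (Fin d) × ℝ, ‖q.1‖ ≤ 1 → M q.1 q.2 ≤ M p.1 p.2) →
      0 < M p.1 p.2 := fun p hp => lt_of_lt_of_le hq (hp q hq1)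
  refine ⟨?_, fun p _ hp => hpos p hp⟩
  -- any maximizer has norm one
  have hnorm : ∀ p : EuclideanSpace ℝ (Fin d) × ℝ,
      (∀ q : EuclideanSpace ℝ (Fin d) × ℝ, ‖q.1‖ ≤ 1 → M q.1 q.2 ≤ M p.1 p.2) →
      1 ≤ ‖p.1‖ := by
    intro p hp
    by_contra! hlt1
    have hκ := hpos p hp
    have hc0 : 0 < 1 + ‖p.1‖ := by positivity
    set c : ℝ := 2 / (1 + ‖p.1‖) with hc
    have hc1 : 1 < c := by rw [hc, lt_div_iff₀ hc0]; linarith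
    have hcn : c * ‖p.1‖ ≤ 1 := by
      rw [hc, div_mul_eq_mul_div, div_le_iff₀ hc0]; linarith
    have h1 := hp (c • p.1, c * p.2) (by
      simp only [norm_smul, Real.norm_eq_abs]
      rw [abs_of_pos (by linarith)]; exact hcn)
    have h2 : c * M p.1 p.2 ≤ M (c • p.1) (c * p.2) := by
      rw [hle]
      intro i
      have := (hle _ _ _).1 (le_refl (M p.1 p.2)) i
      rw [inner_smul_right, ← mul_add, mul_left_comm]
      exact mul_le_mul_of_nonneg_left this (by linarith)
    have h3 : c * M p.1 p.2 ≤ M p.1 p.2 := h2.trans h1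
    nlinarith
  -- existence
  have hex : ∃ p : EuclideanSpace ℝ (Fin d) × ℝ, ‖p.1‖ ≤ 1 ∧
      ∀ q : EuclideanSpace ℝ (Fin d) × ℝ, ‖q.1‖ ≤ 1 → M q.1 q.2 ≤ M p.1 p.2 := by
    obtain ⟨ip, hip⟩ := hplus
    obtain ⟨im, him⟩ := hminus
    have hbd : ∀ r : EuclideanSpace ℝ (Fin d) × ℝ, ‖r.1‖ ≤ 1 → 0 < M r.1 r.2 →
        r ∈ Metric.closedBall (0 : EuclideanSpace ℝ (Fin d)) 1 ×ˢ
          Set.Icc (-‖x ip‖) ‖x im‖ := by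
      intro r hr1 hr
      have h := (hlt _ _ _).1 hr
      have ha := h ip
      have hb := h im
      rw [hytil1 ip hip] at ha
      rw [hytil2 im him] at hb
      have ha' := (mul_pos_iff_of_pos_left (by positivity : (0:ℝ) < 1 / τ)).1 ha
      have e1 : ⟪x ip, r.1⟫ ≤ ‖x ip‖ := (real_inner_le_norm _ _).trans
        (mul_le_of_le_one_right (norm_nonneg _) hr1)
      have e2 : -⟪x im, r.1⟫ ≤ ‖x im‖ := (neg_le_abs _).trans
        ((abs_real_inner_le_norm _ _).trans (mul_le_of_le_one_right (norm_nonneg _) hr1))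
      refine ⟨by simpa using hr1, ?_, ?_⟩
      · linarith
      · linarith
    have hcont : Continuous fun r : EuclideanSpace ℝ (Fin d) × ℝ => M r.1 r.2 := by
      simp only [hM]
      refine Continuous.finset_inf'_apply _ ?_
      intro i _
      fun_prop
    obtain ⟨p, hpK, hp⟩ := ((isCompact_closedBall (0 : EuclideanSpace ℝ (Fin d)) 1).prod
      (isCompact_Icc (a := -‖x ip‖) (b := ‖x im‖))).exists_isMaxOn
      ⟨q, hbd q hq1 hq⟩ hcont.continuousOn
    refine ⟨p, by simpa using hpK.1, ?_⟩
    intro r hr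
    by_cases h : 0 < M r.1 r.2
    · exact hp (hbd r hr h)
    · have : M q.1 q.2 ≤ M p.1 p.2 := hp (hbd q hq1 hq)
      linarith
  obtain ⟨p, hp1, hp⟩ := hex
  refine ⟨p, ⟨hp1, hp⟩, ?_⟩
  rintro r ⟨hr1, hr⟩
  have hpr : M r.1 r.2 = M p.1 p.2 := le_antisymm (hp r hr1) (hr p hp1)
  have hP := (hle _ _ _).1 (le_refl (M p.1 p.2))
  have hR := (hle _ _ _).1 hpr.ge
  set m : EuclideanSpace ℝ (Fin d) × ℝ := ((1/2 : ℝ) • (p.1 + r.1), (p.2 + r.2) / 2) with hm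
  have hmn : ‖m.1‖ = ‖p.1 + r.1‖ / 2 := by
    simp only [hm, norm_smul]
    norm_num
    ring
  have hm1 : ‖m.1‖ ≤ 1 := by
    rw [hmn]; linarith [norm_add_le p.1 r.1]
  have hmv : ∀ i, ytil i * (⟪x i, m.1⟫ + m.2) =
      (ytil i * (⟪x i, p.1⟫ + p.2) + ytil i * (⟪x i, r.1⟫ + r.2)) / 2 := by
    intro i
    simp only [hm, inner_smul_right, inner_add_right]
    ring
  have hmM : M p.1 p.2 ≤ M m.1 m.2 := by
    rw [hle]
    intro i
    rw [hmv]
    linarith [hP i, hR i]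
  have h1m := hnorm m (fun s hs => (hp s hs).trans hmM)
  have hβ : r.1 = p.1 := by
    have hpl := parallelogram_law_with_norm ℝ p.1 r.1
    have hge : 2 ≤ ‖p.1 + r.1‖ := by rw [hmn] at h1m; linarith
    have : ‖p.1 - r.1‖ = 0 := by
      nlinarith [norm_nonneg p.1, norm_nonneg r.1, norm_nonneg (p.1 - r.1)]
    exact (sub_eq_zero.1 (norm_eq_zero.1 this)).symm
  refine Prod.ext hβ ?_
  by_contra hne
  have : M p.1 p.2 < M m.1 m.2 := by
    rw [hlt]
    intro i
    rw [hmv]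
    have a := hP i
    have b := hR i
    rw [hβ] at b ⊢
    have hyi : ytil i ≠ 0 := by
      rcases hy i with hi | hi
      · rw [hytil1 i hi]; positivity
      · rw [hytil2 i hi]; norm_num
    have hne' : ytil i * (⟪x i, p.1⟫ + p.2) ≠ ytil i * (⟪x i, p.1⟫ + r.2) := by
      intro h
      have := mul_left_cancel₀ hyi h
      exact hne (by linarith)
    rcases lt_or_gt_of_ne hne' with h | h <;> linarith
  exact absurd (hp m hm1) (not_le.2 this)
end

section
/- Assume at least one label equals +1, at least one label equals −1, and the data are linearly separable. Fix τ > 0 and let (β̂, β̂₀) be the unique maximizer of M_τ(β,β₀) := min_{1≤i≤n} ỹ_i(⟨x_i,β⟩+β₀) over {β : ‖β‖₂ ≤ 1} × ℝ, with optimal value κ̂. Writing m₊ := min{⟨x_i, β̂⟩ : y_i = +1} and m₋ := max{⟨x_i, β̂⟩ : y_i = −1}, one has (τ+1)·κ̂ = m₊ − m₋ and (τ+1)·β̂₀ = −(τ·m₋ + m₊). -/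
open scoped RealInnerProductSpace

/-- Support-vector characterization of the margin-rebalanced SVM:
`(τ+1)·κ̂ = m₊ − m₋` and `(τ+1)·β̂₀ = −(τ·m₋ + m₊)`. -/
theorem stmt_2
    (n d : ℕ) (hn : 1 ≤ n) (hd : 1 ≤ d)
    (x : Fin n → EuclideanSpace ℝ (Fin d))
    (y : Fin n → ℝ) (hy : ∀ i, y i = 1 ∨ y i = -1)
    (hplus : ∃ i, y i = 1) (hminus : ∃ i, y i = -1)
    (hsep : ∃ (β : EuclideanSpace ℝ (Fin d)) (β₀ : ℝ),
      ∀ i, 0 < y i * (⟪x i, β⟫ + β₀))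
    (τ : ℝ) (hτ : 0 < τ)
    (ytil : Fin n → ℝ)
    (hytil1 : ∀ i, y i = 1 → ytil i = 1 / τ)
    (hytil2 : ∀ i, y i = -1 → ytil i = -1)
    (M : EuclideanSpace ℝ (Fin d) → ℝ → ℝ)
    (hM : ∀ β β₀, M β β₀ =
      (Finset.univ : Finset (Fin n)).inf' ⟨hplus.choose, Finset.mem_univ hplus.choose⟩
        fun i => ytil i * (⟪x i, β⟫ + β₀))
    (βhat : EuclideanSpace ℝ (Fin d)) (βhat₀ : ℝ)
    (hnorm : ‖βhat‖ ≤ 1)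
    (hopt : ∀ q : EuclideanSpace ℝ (Fin d) × ℝ, ‖q.1‖ ≤ 1 → M q.1 q.2 ≤ M βhat βhat₀)
    (κhat : ℝ) (hκ : κhat = M βhat βhat₀)
    (mplus mminus : ℝ)
    (hmplus : mplus = sInf {v : ℝ | ∃ i, y i = 1 ∧ v = ⟪x i, βhat⟫})
    (hmminus : mminus = sSup {v : ℝ | ∃ i, y i = -1 ∧ v = ⟪x i, βhat⟫}) :
    (τ + 1) * κhat = mplus - mminus ∧
    (τ + 1) * βhat₀ = -(τ * mminus + mplus) := by
  have hfinP : {v : ℝ | ∃ i, y i = 1 ∧ v = ⟪x i, βhat⟫}.Finite :=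
    (Set.finite_range fun i => ⟪x i, βhat⟫).subset (by
      rintro v ⟨i, _, rfl⟩
      exact ⟨i, rfl⟩)
  have hfinM : {v : ℝ | ∃ i, y i = -1 ∧ v = ⟪x i, βhat⟫}.Finite :=
    (Set.finite_range fun i => ⟪x i, βhat⟫).subset (by
      rintro v ⟨i, _, rfl⟩
      exact ⟨i, rfl⟩)
  have hP : mplus ∈ {v : ℝ | ∃ i, y i = 1 ∧ v = ⟪x i, βhat⟫} := by
    rw [hmplus]
    obtain ⟨i, hi⟩ := hplus
    exact Set.Nonempty.csInf_mem ⟨_, i, hi, rfl⟩ hfinP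
  have hN : mminus ∈ {v : ℝ | ∃ i, y i = -1 ∧ v = ⟪x i, βhat⟫} := by
    rw [hmminus]
    obtain ⟨i, hi⟩ := hminus
    exact Set.Nonempty.csSup_mem ⟨_, i, hi, rfl⟩ hfinM
  have hPle : ∀ i, y i = 1 → mplus ≤ ⟪x i, βhat⟫ := by
    intro i hi
    rw [hmplus]
    exact csInf_le hfinP.bddBelow ⟨i, hi, rfl⟩
  have hNle : ∀ i, y i = -1 → ⟪x i, βhat⟫ ≤ mminus := by
    intro i hi
    rw [hmminus]
    exact le_csSup hfinM.bddAbove ⟨i, hi, rfl⟩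
  have hle : ∀ i, κhat ≤ ytil i * (⟪x i, βhat⟫ + βhat₀) := by
    intro i
    rw [hκ, hM]
    exact Finset.inf'_le (fun i => ytil i * (⟪x i, βhat⟫ + βhat₀)) (Finset.mem_univ i)
  obtain ⟨i, hi, hiv⟩ := hP
  obtain ⟨j, hj, hjv⟩ := hN
  have h1 := hle i
  have h2 := hle j
  rw [hytil1 i hi, ← hiv, one_div_mul_eq_div, le_div_iff₀ hτ] at h1
  rw [hytil2 j hj, ← hjv] at h2
  have hτ1 : 0 < τ + 1 := by linarith
  have h3 : (mplus - mminus) / (τ + 1) ≤ κhat := by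
    rw [hκ]
    refine le_trans ?_ (hopt (βhat, -(τ * mminus + mplus) / (τ + 1)) hnorm)
    rw [hM]
    refine Finset.le_inf' _ _ fun k _ => ?_
    rcases hy k with hk | hk
    · have := hPle k hk
      rw [hytil1 k hk, one_div_mul_eq_div, le_div_iff₀ hτ]
      have e : (mplus - mminus) / (τ + 1) * τ
          = mplus + -(τ * mminus + mplus) / (τ + 1) := by
        field_simp
        ring
      rw [e]
      simpa using this
    · have := hNle k hk
      rw [hytil2 k hk]
      have e : (mplus - mminus) / (τ + 1)
          = -1 * (mminus + -(τ * mminus + mplus) / (τ + 1)) := by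
        field_simp
        ring
      rw [e]
      simp only
      linarith
  rw [div_le_iff₀ hτ1] at h3
  have hk : κhat = -mminus - βhat₀ := by nlinarith
  constructor
  · nlinarith
  · nlinarith
end

section
/- Assume at least one label equals +1, at least one label equals −1, and the data are linearly separable; let (β̂, β̂₀) be the unique maximizer of M₁(β,β₀) := min_{1≤i≤n} y_i(⟨x_i,β⟩+β₀) over {β : ‖β‖₂ ≤ 1} × ℝ (the max-margin classifier). Let ℓ : ℝ → ℝ be convex, non-increasing, non-constant, strictly positive, and rapidly varying in the sense that for every ε ∈ (0,1), ℓ(εt)/ℓ(t) → ∞ as t → +∞. For λ > 0, the ridge-regularized risk R_λ(β,β₀) := (1/n)·Σ_{i=1}^n ℓ(y_i(⟨x_i,β⟩+β₀)) + λ‖β‖₂² attains a global minimum; choose any minimizer (β̂_λ, β̂₀,λ). Then β̂_λ ≠ 0 for all sufficiently small λ > 0, and as λ → 0⁺ one has β̂_λ/‖β̂_λ‖₂ → β̂ and β̂₀,λ/‖β̂_λ‖₂ → β̂₀. -/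
open Filter
open scoped RealInnerProductSpace

set_option maxHeartbeats 1000000 in
/-- Ridge-regularized empirical risk minimizers with a rapidly
varying loss converge in direction to the max-margin solution as the
regularization parameter tends to `0⁺`. -/
theorem stmt_3
    (n d : ℕ) (hn : 1 ≤ n) (hd : 1 ≤ d)
    (x : Fin n → EuclideanSpace ℝ (Fin d))
    (y : Fin n → ℝ) (hy : ∀ i, y i = 1 ∨ y i = -1)
    (hplus : ∃ i, y i = 1) (hminus : ∃ i, y i = -1)
    (hsep : ∃ (β : EuclideanSpace ℝ (Fin d)) (β₀ : ℝ),
      ∀ i, 0 < y i * (⟪x i, β⟫ + β₀))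
    (M : EuclideanSpace ℝ (Fin d) → ℝ → ℝ)
    (hM : ∀ β β₀, M β β₀ =
      (Finset.univ : Finset (Fin n)).inf' ⟨hplus.choose, Finset.mem_univ hplus.choose⟩
        fun i => y i * (⟪x i, β⟫ + β₀))
    (βhat : EuclideanSpace ℝ (Fin d)) (βhat₀ : ℝ)
    (hnorm : ‖βhat‖ ≤ 1)
    (hopt : ∀ q : EuclideanSpace ℝ (Fin d) × ℝ, ‖q.1‖ ≤ 1 → M q.1 q.2 ≤ M βhat βhat₀)
    (ℓ : ℝ → ℝ)
    (hconv : ConvexOn ℝ Set.univ ℓ)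
    (hanti : Antitone ℓ)
    (hnonconst : ∃ s t : ℝ, ℓ s ≠ ℓ t)
    (hpos : ∀ t, 0 < ℓ t)
    (hrapid : ∀ ε : ℝ, ε ∈ Set.Ioo (0 : ℝ) 1 →
      Tendsto (fun t => ℓ (ε * t) / ℓ t) atTop atTop)
    (R : ℝ → EuclideanSpace ℝ (Fin d) → ℝ → ℝ)
    (hR : ∀ lam β β₀, R lam β β₀ =
      (n : ℝ)⁻¹ * ∑ i, ℓ (y i * (⟪x i, β⟫ + β₀)) + lam * ‖β‖ ^ 2)
    (βlam : ℝ → EuclideanSpace ℝ (Fin d)) (β₀lam : ℝ → ℝ)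
    (hminim : ∀ lam, 0 < lam → ∀ q : EuclideanSpace ℝ (Fin d) × ℝ,
      R lam (βlam lam) (β₀lam lam) ≤ R lam q.1 q.2) :
    (∀ lam : ℝ, 0 < lam → ∃ p : EuclideanSpace ℝ (Fin d) × ℝ,
      ∀ q : EuclideanSpace ℝ (Fin d) × ℝ, R lam p.1 p.2 ≤ R lam q.1 q.2) ∧
    (∀ᶠ lam in nhdsWithin (0 : ℝ) (Set.Ioi 0), βlam lam ≠ 0) ∧
    Tendsto (fun lam => (‖βlam lam‖)⁻¹ • βlam lam)
      (nhdsWithin (0 : ℝ) (Set.Ioi 0)) (nhds βhat) ∧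
    Tendsto (fun lam => β₀lam lam / ‖βlam lam‖)
      (nhdsWithin (0 : ℝ) (Set.Ioi 0)) (nhds βhat₀) := by
  classical
  have hn0 : (0 : ℝ) < n := by exact_mod_cast hn
  -- basic facts on the margin
  have hMle : ∀ β β₀ i, M β β₀ ≤ y i * (⟪x i, β⟫ + β₀) := by
    intro β β₀ i
    rw [hM]
    exact Finset.inf'_le (fun i => y i * (⟪x i, β⟫ + β₀)) (Finset.mem_univ i)
  have hleM : ∀ β β₀ c, (∀ i, c ≤ y i * (⟪x i, β⟫ + β₀)) → c ≤ M β β₀ := by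
    intro β β₀ c h
    rw [hM]
    exact Finset.le_inf' _ _ (fun i _ => h i)
  have hMex : ∀ β β₀, ∃ i, M β β₀ = y i * (⟪x i, β⟫ + β₀) := by
    intro β β₀
    obtain ⟨i, _, hi⟩ := Finset.exists_mem_eq_inf'
      (s := (Finset.univ : Finset (Fin n))) ⟨hplus.choose, Finset.mem_univ hplus.choose⟩
      (fun i => y i * (⟪x i, β⟫ + β₀))
    exact ⟨i, by rw [hM]; exact hi⟩
  have hnz : ∀ β β₀, 0 < M β β₀ → β ≠ 0 := by
    rintro β β₀ h rfl
    obtain ⟨i, hi⟩ := hplus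
    obtain ⟨j, hj⟩ := hminus
    have h1 := hMle 0 β₀ i
    have h2 := hMle 0 β₀ j
    rw [hi] at h1
    rw [hj] at h2
    simp only [inner_zero_right] at h1 h2
    linarith
  obtain ⟨K, hK⟩ : ∃ K, K = M βhat βhat₀ := ⟨_, rfl⟩
  have hscale : ∀ β β₀ (s : ℝ), 0 ≤ s → s * M β β₀ ≤ M (s • β) (s * β₀) := by
    intro β β₀ s hs
    apply hleM
    intro i
    have := mul_le_mul_of_nonneg_left (hMle β β₀ i) hs
    rw [inner_smul_right]
    calc _ ≤ _ := this
      _ = _ := by ring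
  have hhom : ∀ β β₀, β ≠ 0 → M β β₀ ≤ ‖β‖ * K := by
    intro β β₀ hβ
    have hp : 0 < ‖β‖ := norm_pos_iff.2 hβ
    have h1 := hscale β β₀ (‖β‖⁻¹) (by positivity)
    have h2 := hopt (‖β‖⁻¹ • β, ‖β‖⁻¹ * β₀) (by
      simp only [norm_smul, norm_inv, norm_norm]
      rw [inv_mul_cancel₀ hp.ne'])
    have h3 : ‖β‖⁻¹ * M β β₀ ≤ K := by rw [hK]; exact h1.trans h2
    rwa [inv_mul_le_iff₀ hp] at h3
  have hKpos : 0 < K := by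
    obtain ⟨β, β₀, h⟩ := hsep
    have h0 : 0 < M β β₀ := by
      obtain ⟨i, hi⟩ := hMex β β₀
      rw [hi]; exact h i
    have h1 := hhom β β₀ (hnz _ _ h0)
    by_contra hc
    have := mul_nonpos_of_nonneg_of_nonpos (norm_nonneg β) (not_lt.1 hc)
    linarith
  -- risk bounds
  have hub : ∀ t : ℝ, 0 ≤ t →
      (n : ℝ)⁻¹ * ∑ i, ℓ (y i * (⟪x i, t • βhat⟫ + t * βhat₀)) ≤ ℓ (t * K) := by
    intro t ht
    have : ∑ i, ℓ (y i * (⟪x i, t • βhat⟫ + t * βhat₀)) ≤ ∑ _i : Fin n, ℓ (t * K) := by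
      apply Finset.sum_le_sum
      intro i _
      apply hanti
      rw [hK]
      exact (hscale _ _ t ht).trans (hMle _ _ i)
    rw [inv_mul_le_iff₀ hn0]
    simpa using this
  have hlb : ∀ β β₀, (n : ℝ)⁻¹ * ℓ (M β β₀) ≤
      (n : ℝ)⁻¹ * ∑ i, ℓ (y i * (⟪x i, β⟫ + β₀)) := by
    intro β β₀
    apply mul_le_mul_of_nonneg_left _ (by positivity)
    obtain ⟨i, hi⟩ := hMex β β₀
    rw [hi]
    exact Finset.single_le_sum (f := fun i => ℓ (y i * (⟪x i, β⟫ + β₀)))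
      (fun j _ => (hpos _).le) (Finset.mem_univ i)
  have hnb : ∀ t : ℝ, 0 ≤ t → ‖t • βhat‖ ^ 2 ≤ t ^ 2 := by
    intro t ht
    rw [norm_smul, Real.norm_of_nonneg ht]
    apply pow_le_pow_left₀ (by positivity)
    nlinarith
  -- the loss tends to zero
  have hsmall : ∀ δ : ℝ, 0 < δ → ∃ T : ℝ, 0 < T ∧ ℓ T < δ := by
    intro δ hδ
    have h := hrapid (1/2) ⟨by norm_num, by norm_num⟩
    obtain ⟨T, h1, h2⟩ := ((h.eventually_gt_atTop (ℓ 0 / δ)).and (eventually_gt_atTop 0)).exists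
    refine ⟨T, h2, ?_⟩
    rw [div_lt_div_iff₀ hδ (hpos T)] at h1
    have h3 : ℓ (1/2 * T) ≤ ℓ 0 := hanti (by positivity)
    have h4 := mul_le_mul_of_nonneg_right h3 hδ.le
    exact lt_of_mul_lt_mul_left (h1.trans_le h4) (hpos 0).le
  set F := nhdsWithin (0 : ℝ) (Set.Ioi 0) with hF
  have hFpos : ∀ᶠ lam in F, 0 < lam := self_mem_nhdsWithin
  have hm : Tendsto (fun lam => M (βlam lam) (β₀lam lam)) F atTop := by
    rw [tendsto_atTop]
    intro C
    obtain ⟨T, hT, hT'⟩ := hsmall ((n : ℝ)⁻¹ * ℓ C / 2) (by have := hpos C; positivity)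
    have hlim : Tendsto (fun lam : ℝ => lam * (T / K) ^ 2) F (nhds (0 * (T / K) ^ 2)) :=
      ((continuous_id.mul continuous_const).tendsto 0).mono_left nhdsWithin_le_nhds
    rw [zero_mul] at hlim
    have hev := hlim.eventually (gt_mem_nhds
      (show (0 : ℝ) < (n : ℝ)⁻¹ * ℓ C / 2 by have := hpos C; positivity))
    filter_upwards [hev, hFpos] with lam h1 h2
    have h3 := hminim lam h2 ((T / K) • βhat, (T / K) * βhat₀)
    rw [hR, hR] at h3
    simp only at h3
    have htp : 0 ≤ T / K := by positivity
    have h4 := hub _ htp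
    rw [div_mul_cancel₀ _ hKpos.ne'] at h4
    have h5 := mul_le_mul_of_nonneg_left (hnb _ htp) h2.le
    have h6 := hlb (βlam lam) (β₀lam lam)
    have h7 : 0 ≤ lam * ‖βlam lam‖ ^ 2 := by positivity
    have h8 : (n : ℝ)⁻¹ * ℓ (M (βlam lam) (β₀lam lam)) < (n : ℝ)⁻¹ * ℓ C := by linarith
    have h9 := lt_of_mul_lt_mul_left h8 (by positivity)
    by_contra hc
    exact absurd (hanti (not_le.1 hc).le) (not_le.2 h9)
  have hmpos := hm.eventually_gt_atTop 0
  have hne : ∀ᶠ lam in F, βlam lam ≠ 0 := hmpos.mono fun lam h => hnz _ _ h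
  have hr : Tendsto (fun lam => ‖βlam lam‖ * K) F atTop := by
    apply tendsto_atTop_mono' F _ hm
    filter_upwards [hne] with lam h using hhom _ _ h
  -- normalized margin
  have hratio : Tendsto (fun lam => M (βlam lam) (β₀lam lam) / (‖βlam lam‖ * K)) F (nhds 1) := by
    rw [tendsto_order]
    constructor
    · intro e he
      obtain ⟨ε, hε0, hε1, hε⟩ : ∃ ε : ℝ, 0 < ε ∧ ε < 1 ∧ e < ε := by
        refine ⟨(max e 0 + 1) / 2, ?_, ?_, ?_⟩
        · have := le_max_right e 0; linarith
        · have : max e 0 < 1 := max_lt he one_pos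
          linarith
        · have := le_max_left e 0; linarith
      have hq := (hrapid ε ⟨hε0, hε1⟩).comp hr
      filter_upwards [hq.eventually_gt_atTop (n : ℝ), hFpos, hne] with lam h1 h2 h3
      have hrp : 0 < ‖βlam lam‖ := norm_pos_iff.2 h3
      apply hε.trans
      rw [lt_div_iff₀ (by positivity)]
      by_contra hc
      have h4 := hanti (not_lt.1 hc)
      simp only [Function.comp] at h1
      rw [lt_div_iff₀ (hpos _)] at h1
      have h5 := hminim lam h2 (‖βlam lam‖ • βhat, ‖βlam lam‖ * βhat₀)
      rw [hR, hR] at h5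
      simp only at h5
      have h6 := hub _ hrp.le
      have h7 := mul_le_mul_of_nonneg_left (hnb _ hrp.le) h2.le
      have h8 := hlb (βlam lam) (β₀lam lam)
      have h9 : (n : ℝ)⁻¹ * ℓ (M (βlam lam) (β₀lam lam)) ≤ ℓ (‖βlam lam‖ * K) := by linarith
      rw [inv_mul_le_iff₀ hn0] at h9
      linarith
    · intro e he
      filter_upwards [hne] with lam h3
      have hrp : 0 < ‖βlam lam‖ := norm_pos_iff.2 h3
      refine lt_of_le_of_lt ?_ he
      rw [div_le_one (by positivity)]
      exact hhom _ _ h3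
  set g := fun lam => M (βlam lam) (β₀lam lam) / (‖βlam lam‖ * K) with hg
  -- normalized solution
  have hgM : ∀ᶠ lam in F, g lam * K ≤ M (‖βlam lam‖⁻¹ • βlam lam) (β₀lam lam / ‖βlam lam‖) := by
    filter_upwards [hne] with lam h3
    have hrp : 0 < ‖βlam lam‖ := norm_pos_iff.2 h3
    have h1 := hscale (βlam lam) (β₀lam lam) (‖βlam lam‖⁻¹) (by positivity)
    have e1 : g lam * K = ‖βlam lam‖⁻¹ * M (βlam lam) (β₀lam lam) := by
      simp only [hg]; field_simp
    have e2 : β₀lam lam / ‖βlam lam‖ = ‖βlam lam‖⁻¹ * β₀lam lam := by ring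
    rw [e1, e2]; exact h1
  have hdist : ∀ᶠ lam in F,
      ‖‖βlam lam‖⁻¹ • βlam lam - βhat‖ ^ 2 ≤ 4 - (1 + g lam) ^ 2 := by
    filter_upwards [hne, hgM, hratio.eventually (lt_mem_nhds one_pos)] with lam h3 h4 h5
    have hrp : 0 < ‖βlam lam‖ := norm_pos_iff.2 h3
    have hu : ‖‖βlam lam‖⁻¹ • βlam lam‖ = 1 := by
      simp only [norm_smul, norm_inv, norm_norm]
      rw [inv_mul_cancel₀ hrp.ne']
    generalize ‖βlam lam‖⁻¹ • βlam lam = u at *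
    generalize β₀lam lam / ‖βlam lam‖ = c at *
    have h6 : g lam * K + K ≤ M (u + βhat) (c + βhat₀) := by
      apply hleM
      intro i
      have a1 := hMle u c i
      have a2 := hMle βhat βhat₀ i
      rw [inner_add_right]
      calc g lam * K + K ≤ _ := add_le_add (h4.trans a1) (hK.le.trans a2)
        _ = _ := by ring
    have h5' : 0 < g lam := h5
    have h7 : 0 < M (u + βhat) (c + βhat₀) := lt_of_lt_of_le (by positivity) h6
    have h8 := hhom (u + βhat) (c + βhat₀) (hnz _ _ h7)
    have h9 : 1 + g lam ≤ ‖u + βhat‖ := by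
      apply le_of_mul_le_mul_right _ hKpos
      linarith
    have h10 := parallelogram_law_with_norm ℝ u βhat
    rw [hu] at h10
    nlinarith [norm_nonneg βhat, norm_nonneg (u + βhat)]
  have hU : Tendsto (fun lam => (‖βlam lam‖)⁻¹ • βlam lam) F (nhds βhat) := by
    rw [tendsto_iff_norm_sub_tendsto_zero]
    have h1 : Tendsto (fun lam => 4 - (1 + g lam) ^ 2) F (nhds 0) := by
      have := ((hratio.const_add 1).pow 2).const_sub 4
      norm_num at this
      exact this
    have h2 : Tendsto (fun lam => ‖‖βlam lam‖⁻¹ • βlam lam - βhat‖ ^ 2) F (nhds 0) :=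
      tendsto_of_tendsto_of_tendsto_of_le_of_le' tendsto_const_nhds h1
        (Eventually.of_forall fun _ => by positivity) hdist
    have h3 := h2.sqrt
    simpa [Real.sqrt_sq] using h3
  -- tight constraints
  have htight : ∀ s : ℝ, (s = 1 ∨ s = -1) → (∃ i, y i = s) →
      ∃ i, y i = s ∧ s * (⟪x i, βhat⟫ + βhat₀) ≤ K := by
    intro s hs ⟨i₀, hi₀⟩
    obtain ⟨j, hj, hjmin⟩ := Finset.exists_min_image
      (Finset.univ.filter fun i => y i = s) (fun i => s * (⟪x i, βhat⟫ + βhat₀))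
      ⟨i₀, by simp [hi₀]⟩
    have hjs : y j = s := by simpa using hj
    refine ⟨j, hjs, ?_⟩
    by_contra hc
    push Not at hc
    obtain ⟨a, ha⟩ : ∃ a, a = s * (⟪x j, βhat⟫ + βhat₀) := ⟨_, rfl⟩
    rw [← ha] at hc
    have h1 : (a + K) / 2 ≤ M βhat (βhat₀ - s * ((a - K) / 2)) := by
      apply hleM
      intro i
      have hss : s * s = 1 := by rcases hs with h | h <;> rw [h] <;> norm_num
      by_cases hi : y i = s
      · have h2 := hjmin i (by simp [hi])
        rw [← ha] at h2
        rw [hi]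
        have : s * (⟪x i, βhat⟫ + (βhat₀ - s * ((a - K) / 2))) =
          s * (⟪x i, βhat⟫ + βhat₀) - (s * s) * ((a - K) / 2) := by ring
        rw [this, hss]; linarith
      · have hi' : y i = -s := by
          rcases hs with h | h <;> rcases hy i with h' | h' <;> rw [h, h'] at hi <;> rw [h, h']
          · exact absurd rfl hi
          · norm_num
          · exact absurd rfl hi
        have h2 := hMle βhat βhat₀ i
        rw [← hK, hi'] at h2
        rw [hi']
        have : -s * (⟪x i, βhat⟫ + (βhat₀ - s * ((a - K) / 2))) =
          -s * (⟪x i, βhat⟫ + βhat₀) + (s * s) * ((a - K) / 2) := by ring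
        rw [this, hss]; linarith
    have h2 := hopt (βhat, βhat₀ - s * ((a - K) / 2)) hnorm
    simp only [← hK] at h2
    linarith
  refine ⟨fun lam hlam => ⟨(βlam lam, β₀lam lam), hminim lam hlam⟩, hne, hU, ?_⟩
  obtain ⟨j, hj, hjK⟩ := htight 1 (Or.inl rfl) hplus
  obtain ⟨k, hk, hkK⟩ := htight (-1) (Or.inr rfl) hminus
  have hjK' : K ≤ 1 * (⟪x j, βhat⟫ + βhat₀) := by
    have := hMle βhat βhat₀ j
    rwa [hj, ← hK] at this
  have hkK' : K ≤ (-1) * (⟪x k, βhat⟫ + βhat₀) := by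
    have := hMle βhat βhat₀ k
    rwa [hk, ← hK] at this
  have hlow : Tendsto (fun lam => g lam * K - ⟪x j, ‖βlam lam‖⁻¹ • βlam lam⟫) F (nhds βhat₀) := by
    have := (hratio.mul_const K).sub ((tendsto_const_nhds (x := x j)).inner (𝕜 := ℝ) hU)
    convert this using 2
    linarith
  have hupp : Tendsto (fun lam => -(g lam * K) - ⟪x k, ‖βlam lam‖⁻¹ • βlam lam⟫) F
      (nhds βhat₀) := by
    have := (hratio.mul_const K).neg.sub ((tendsto_const_nhds (x := x k)).inner (𝕜 := ℝ) hU)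
    convert this using 2
    linarith
  refine tendsto_of_tendsto_of_tendsto_of_le_of_le' hlow hupp ?_ ?_
  · filter_upwards [hgM] with lam h
    have := h.trans (hMle _ _ j)
    rw [hj] at this
    linarith
  · filter_upwards [hgM] with lam h
    have := h.trans (hMle _ _ k)
    rw [hk] at this
    linarith
end

section
/- Let (Ω, F, P) be a probability space, V : Ω → ℝ measurable, a ∈ ℝ with a ≠ 0, and ℓ : ℝ → ℝ nonnegative and strictly convex (hence continuous). If ξ₁, ξ₂ : Ω → ℝ are measurable with P(ξ₁ ≠ ξ₂) > 0, E[ℓ(V + a·ξ₁)] < ∞, and E[ℓ(V + a·ξ₂)] < ∞, then for every α ∈ (0,1): E[ℓ(V + a·(α·ξ₁ + (1−α)·ξ₂))] < α·E[ℓ(V + a·ξ₁)] + (1−α)·E[ℓ(V + a·ξ₂)]. In particular, the functional ξ ↦ E[ℓ(V + a·ξ)] is strictly convex on L²(P) (up to almost-sure equality). -/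
open MeasureTheory

/-- Strict convexity of the risk functional `ξ ↦ E[ℓ(V + a·ξ)]`
for a strictly convex nonnegative loss. -/
theorem stmt_6 {Ω : Type*} [MeasurableSpace Ω] (P : Measure Ω) [IsProbabilityMeasure P]
    (V : Ω → ℝ) (hV : Measurable V)
    (a : ℝ) (ha : a ≠ 0)
    (ℓ : ℝ → ℝ) (hnonneg : ∀ t, 0 ≤ ℓ t) (hconv : StrictConvexOn ℝ Set.univ ℓ)
    (ξ₁ ξ₂ : Ω → ℝ) (h₁ : Measurable ξ₁) (h₂ : Measurable ξ₂)
    (hne : 0 < P {ω | ξ₁ ω ≠ ξ₂ ω})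
    (hint₁ : Integrable (fun ω => ℓ (V ω + a * ξ₁ ω)) P)
    (hint₂ : Integrable (fun ω => ℓ (V ω + a * ξ₂ ω)) P)
    (α : ℝ) (hα : α ∈ Set.Ioo (0 : ℝ) 1) :
    (∫ ω, ℓ (V ω + a * (α * ξ₁ ω + (1 - α) * ξ₂ ω)) ∂P) <
      α * (∫ ω, ℓ (V ω + a * ξ₁ ω) ∂P) + (1 - α) * (∫ ω, ℓ (V ω + a * ξ₂ ω) ∂P) := by
  obtain ⟨hα0, hα1⟩ := hα
  have hβ : 0 < 1 - α := by linarith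
  have hcont : Continuous ℓ := by
    rw [← continuousOn_univ]
    exact hconv.convexOn.continuousOn isOpen_univ
  have heq : ∀ ω, V ω + a * (α * ξ₁ ω + (1 - α) * ξ₂ ω) =
      α • (V ω + a * ξ₁ ω) + (1 - α) • (V ω + a * ξ₂ ω) := by
    intro ω
    simp only [smul_eq_mul]
    ring
  have hle : ∀ ω, ℓ (V ω + a * (α * ξ₁ ω + (1 - α) * ξ₂ ω)) ≤
      α * ℓ (V ω + a * ξ₁ ω) + (1 - α) * ℓ (V ω + a * ξ₂ ω) := by
    intro ω
    rw [heq]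
    exact hconv.convexOn.2 (Set.mem_univ _) (Set.mem_univ _) hα0.le hβ.le (by ring)
  have hlt : ∀ ω, ξ₁ ω ≠ ξ₂ ω → ℓ (V ω + a * (α * ξ₁ ω + (1 - α) * ξ₂ ω)) <
      α * ℓ (V ω + a * ξ₁ ω) + (1 - α) * ℓ (V ω + a * ξ₂ ω) := by
    intro ω hω
    rw [heq]
    refine hconv.2 (Set.mem_univ _) (Set.mem_univ _) ?_ hα0 hβ (by ring)
    intro h
    exact hω (mul_left_cancel₀ ha (add_left_cancel h))
  have hg : Integrable (fun ω => α * ℓ (V ω + a * ξ₁ ω) + (1 - α) * ℓ (V ω + a * ξ₂ ω)) P :=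
    (hint₁.const_mul α).add (hint₂.const_mul (1 - α))
  have hf : Integrable (fun ω => ℓ (V ω + a * (α * ξ₁ ω + (1 - α) * ξ₂ ω))) P := by
    refine hg.mono' ?_ (Filter.Eventually.of_forall fun ω => ?_)
    · exact (hcont.measurable.comp (by fun_prop)).aestronglyMeasurable
    · rw [Real.norm_of_nonneg (hnonneg _)]
      exact hle ω
  rw [← integral_const_mul, ← integral_const_mul,
    ← integral_add (hint₁.const_mul α) (hint₂.const_mul (1 - α)), ← sub_pos,
    ← integral_sub hg hf]
  rw [integral_pos_iff_support_of_nonneg (fun ω => sub_nonneg.2 (hle ω)) (hg.sub hf)]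
  refine hne.trans_le (measure_mono fun ω hω => ?_)
  exact (sub_pos.2 (hlt ω hω)).ne'
end

section
/- For every x ∈ ℝ: Φ(x)² > φ(x)·(x·Φ(x) + φ(x)). Equivalently, Φ(x)²/φ(x) > E[(Z + x)₊] for Z standard normal, where a₊ := max(a, 0). -/
open MeasureTheory

/-- The standard normal density. -/
noncomputable def normPDF (x : ℝ) : ℝ := Real.exp (-x ^ 2 / 2) / Real.sqrt (2 * Real.pi)

/-- The standard normal cumulative distribution function. -/
noncomputable def normCDF (x : ℝ) : ℝ := ∫ t in Set.Iic x, normPDF t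

lemma normPDF_pos (x : ℝ) : 0 < normPDF x := by unfold normPDF; positivity

lemma normPDF_cont : Continuous normPDF := by unfold normPDF; fun_prop

lemma normPDF_integrable : Integrable normPDF := by
  have h := (integrable_exp_neg_mul_sq (b := 1 / 2) (by norm_num)).div_const (Real.sqrt (2 * Real.pi))
  refine h.congr (Filter.Eventually.of_forall fun x => ?_)
  simp only [normPDF]
  congr 2
  ring

lemma normPDF_deriv (x : ℝ) : HasDerivAt normPDF (-x * normPDF x) x := by
  have h1 : HasDerivAt (fun x : ℝ => -x ^ 2 / 2) (-x) x := by
    have := ((hasDerivAt_pow 2 x).neg).div_const 2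
    refine this.congr_deriv ?_
    norm_num
    ring
  have h := h1.exp.div_const (Real.sqrt (2 * Real.pi))
  refine h.congr_deriv ?_
  simp only [normPDF]
  ring

lemma normCDF_eq (x : ℝ) : normCDF x = normCDF 0 + ∫ t in (0 : ℝ)..x, normPDF t := by
  have := intervalIntegral.integral_Iic_sub_Iic (μ := volume) (f := normPDF) (a := 0) (b := x)
    normPDF_integrable.integrableOn normPDF_integrable.integrableOn
  simp only [normCDF]
  linarith

lemma normCDF_deriv (x : ℝ) : HasDerivAt normCDF (normPDF x) x := by
  have h : HasDerivAt (fun u => normCDF 0 + ∫ t in (0 : ℝ)..u, normPDF t) (normPDF x) x :=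
    (normPDF_cont.integral_hasStrictDerivAt 0 x).hasDerivAt.const_add _
  have e : normCDF = fun u => normCDF 0 + ∫ t in (0 : ℝ)..u, normPDF t := funext normCDF_eq
  rw [e]
  exact h

lemma normCDF_tendsto : Filter.Tendsto normCDF Filter.atBot (nhds 0) := by
  have h := intervalIntegral_tendsto_integral_Iic (μ := volume) (f := normPDF) 0
    normPDF_integrable.integrableOn Filter.tendsto_id
  have h2 := h.const_sub (normCDF 0)
  have e : normCDF 0 - (∫ t in Set.Iic (0 : ℝ), normPDF t) = 0 := sub_self _
  rw [e] at h2
  refine h2.congr fun x => ?_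
  rw [normCDF_eq x, id, intervalIntegral.integral_symm 0 x]
  ring

lemma pow_normPDF_tendsto (s : ℝ) :
    Filter.Tendsto (fun x => |x| ^ s * normPDF x) Filter.atBot (nhds 0) := by
  have h := (tendsto_rpow_abs_mul_exp_neg_mul_sq_cocompact (a := 1 / 2) (by norm_num) s).mono_left
    atBot_le_cocompact
  have h2 := h.div_const (Real.sqrt (2 * Real.pi))
  rw [zero_div] at h2
  refine h2.congr fun x => ?_
  simp only [normPDF]
  rw [mul_div_assoc]
  congr 3
  ring

lemma normPDF_tendsto : Filter.Tendsto normPDF Filter.atBot (nhds 0) := by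
  simpa using pow_normPDF_tendsto 0

lemma id_mul_normPDF_tendsto :
    Filter.Tendsto (fun x => x * normPDF x) Filter.atBot (nhds 0) := by
  refine squeeze_zero_norm (fun x => ?_) (pow_normPDF_tendsto 1)
  rw [norm_mul, Real.norm_eq_abs, Real.norm_eq_abs, abs_of_pos (normPDF_pos x), Real.rpow_one]

lemma key (c x : ℝ) : 0 < (1 + c ^ 2) * normCDF x - x * normPDF x - 2 * c * normPDF x := by
  set H : ℝ → ℝ := fun x => (1 + c ^ 2) * normCDF x - x * normPDF x - 2 * c * normPDF x with hH
  have hd : ∀ t, HasDerivAt H ((t + c) ^ 2 * normPDF t) t := fun t => by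
    have := (((normCDF_deriv t).const_mul (1 + c ^ 2)).sub
      ((hasDerivAt_id t).mul (normPDF_deriv t))).sub ((normPDF_deriv t).const_mul (2 * c))
    refine this.congr_deriv ?_
    simp only [id]
    ring
  have hm : Monotone H := monotone_of_hasDerivAt_nonneg hd
    fun t => mul_nonneg (sq_nonneg _) (normPDF_pos t).le
  have hl : Filter.Tendsto H Filter.atBot (nhds 0) := by
    have := ((normCDF_tendsto.const_mul (1 + c ^ 2)).sub id_mul_normPDF_tendsto).sub
      (normPDF_tendsto.const_mul (2 * c))
    simpa using this
  have hs : StrictMonoOn H (Set.Iic (-c)) := by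
    refine strictMonoOn_of_deriv_pos (convex_Iic _)
      (fun t _ => (hd t).continuousAt.continuousWithinAt) fun t ht => ?_
    rw [interior_Iic, Set.mem_Iio] at ht
    rw [(hd t).deriv]
    have : t + c ≠ 0 := by linarith
    have := normPDF_pos t
    positivity
  have h0 := hm.le_of_tendsto hl (min x (-c) - 1)
  have h1 : H (min x (-c) - 1) < H (min x (-c)) :=
    hs (by have := min_le_right x (-c); simp only [Set.mem_Iic]; linarith)
      (Set.mem_Iic.2 (min_le_right _ _)) (by linarith)
  exact (h0.trans_lt h1).trans_le (hm (min_le_left _ _))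

/-- For every real `x`, `Φ(x)² > φ(x)·(x·Φ(x) + φ(x))`. -/
theorem stmt_8 (x : ℝ) :
    normPDF x * (x * normCDF x + normPDF x) < normCDF x ^ 2 := by
  have hp : 0 < normCDF x := by
    have hm : StrictMono normCDF := strictMono_of_hasDerivAt_pos normCDF_deriv normPDF_pos
    exact (hm.monotone.le_of_tendsto normCDF_tendsto (x - 1)).trans_lt (hm (by linarith))
  have h := mul_pos hp (key (normPDF x / normCDF x) x)
  have e : normCDF x * ((1 + (normPDF x / normCDF x) ^ 2) * normCDF x - x * normPDF x
      - 2 * (normPDF x / normCDF x) * normPDF x)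
      = normCDF x ^ 2 - normPDF x * (x * normCDF x + normPDF x) := by
    field_simp
    ring
  linarith
end

section
/- Define Err₊*(π, m, δ) := Φ(−ρ*(π,m,δ)·m − β₀*(π,m,δ)), where ρ*(π,m,δ) is the unique ρ ∈ (0,1) satisfying π·δ·g(ρ/(2πmδ)) + (1−π)·δ·g(ρ/(2(1−π)mδ)) = 1 − ρ² and β₀*(π,m,δ) := (1/2)·(g₁⁻¹(ρ*/(2(1−π)mδ)) − g₁⁻¹(ρ*/(2πmδ))). Then Err₊* is strictly decreasing in π on (0,1/2) (for fixed m, δ), strictly decreasing in m on (0,∞) (for fixed π ∈ (0,1/2), δ), and strictly decreasing in δ on (0,∞) (for fixed π ∈ (0,1/2), m). -/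
open MeasureTheory

/-- `g₁(x) = x·Φ(x) + φ(x)`, equal to `E[(Z+x)₊]` for standard normal `Z`. -/
noncomputable def g1 (x : ℝ) : ℝ := x * normCDF x + normPDF x

/-- `g₂(x) = (x²+1)·Φ(x) + x·φ(x)`, equal to `E[(Z+x)₊²]` for standard normal `Z`. -/
noncomputable def g2 (x : ℝ) : ℝ := (x ^ 2 + 1) * normCDF x + x * normPDF x

/-- The inverse of `g₁` (on its range `(0,∞)`). -/
noncomputable def g1inv : ℝ → ℝ := Function.invFun g1

/-- `g = g₂ ∘ g₁⁻¹`. -/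
noncomputable def gfn (t : ℝ) : ℝ := g2 (g1inv t)

open Filter Topology

namespace MMProof

lemma pdf_pos (x : ℝ) : 0 < normPDF x := by unfold normPDF; positivity

lemma pdf_cont : Continuous normPDF := by unfold normPDF; fun_prop

lemma pdf_int : Integrable normPDF := by
  have h := (integrable_exp_neg_mul_sq (b := 1 / 2) (by norm_num)).div_const (Real.sqrt (2 * Real.pi))
  refine h.congr (Eventually.of_forall fun x => ?_)
  simp only [normPDF]
  congr 2
  ring

lemma pdf_deriv (x : ℝ) : HasDerivAt normPDF (-x * normPDF x) x := by
  unfold normPDF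
  have h1 : HasDerivAt (fun y : ℝ => -y ^ 2 / 2) (-x) x := by
    have := ((hasDerivAt_pow 2 x).neg).div_const 2
    exact this.congr_deriv (by simp; ring)
  have h := (h1.exp).div_const (Real.sqrt (2 * Real.pi))
  exact h.congr_deriv (by ring)

lemma cdf_eq (x : ℝ) : normCDF x = normCDF 0 + ∫ t in (0:ℝ)..x, normPDF t := by
  have := intervalIntegral.integral_Iic_sub_Iic (a := 0) (b := x) pdf_int.integrableOn pdf_int.integrableOn
  unfold normCDF
  linarith

lemma cdf_deriv (x : ℝ) : HasDerivAt normCDF (normPDF x) x := by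
  have h := (intervalIntegral.integral_hasDerivAt_right (pdf_cont.intervalIntegrable 0 x)
    (pdf_cont.stronglyMeasurableAtFilter _ _) pdf_cont.continuousAt).const_add (normCDF 0)
  exact h.congr_of_eventuallyEq (Eventually.of_forall cdf_eq)

lemma cdf_tendsto : Tendsto normCDF atBot (𝓝 0) := by
  have h := intervalIntegral_tendsto_integral_Iic (0:ℝ) (pdf_int.integrableOn) tendsto_id
  have h2 : Tendsto (fun x => normCDF 0 - ∫ t in x..(0:ℝ), normPDF t) atBot (𝓝 (normCDF 0 - normCDF 0)) :=
    tendsto_const_nhds.sub h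
  rw [sub_self] at h2
  refine h2.congr fun x => ?_
  rw [cdf_eq x, intervalIntegral.integral_symm]
  ring

lemma pos_of_deriv {f f' : ℝ → ℝ} (hd : ∀ x, HasDerivAt f (f' x) x) (hp : ∀ x, 0 < f' x)
    (hl : Tendsto f atBot (𝓝 0)) : StrictMono f ∧ ∀ x, 0 < f x := by
  have hm : StrictMono f := strictMono_of_deriv_pos fun x => by rw [(hd x).deriv]; exact hp x
  refine ⟨hm, fun x => ?_⟩
  have h1 : 0 ≤ f (x - 1) := le_of_tendsto hl (by
    filter_upwards [eventually_le_atBot (x - 1)] with y hy using hm.monotone hy)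
  exact h1.trans_lt (hm (by linarith))

lemma cdf_mono : StrictMono normCDF := (pos_of_deriv cdf_deriv pdf_pos cdf_tendsto).1
lemma cdf_pos (x : ℝ) : 0 < normCDF x := (pos_of_deriv cdf_deriv pdf_pos cdf_tendsto).2 x

lemma pow_pdf_tendsto (k : ℕ) : Tendsto (fun x => x ^ k * normPDF x) atBot (𝓝 0) := by
  have h := (rpow_mul_exp_neg_mul_sq_isLittleO_exp_neg (b := 1/2) (by norm_num) (k:ℝ)).trans_tendsto
    (by
      have : Tendsto (fun x : ℝ => Real.exp (-(1/2) * x)) atTop (𝓝 0) := by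
        refine Real.tendsto_exp_atBot.comp ?_
        exact tendsto_id.const_mul_atTop_of_neg (by norm_num)
      exact this)
  have h2 := (h.comp tendsto_neg_atBot_atTop).const_mul ((-1) ^ k / Real.sqrt (2 * Real.pi))
  rw [mul_zero] at h2
  refine h2.congr fun x => ?_
  simp only [Function.comp, Real.rpow_natCast, normPDF]
  rw [neg_pow x k]
  have e : ((-1:ℝ)) ^ k * (-1) ^ k = 1 := by rw [← mul_pow]; norm_num
  have e2 : -(1/2) * (-x) ^ 2 = -x ^ 2 / 2 := by ring
  rw [e2]
  calc _ = ((-1:ℝ) ^ k * (-1) ^ k) * (x ^ k * (Real.exp (-x ^ 2 / 2) / Real.sqrt (2 * Real.pi))) := by ring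
    _ = _ := by rw [e, one_mul]

lemma pdf_tendsto : Tendsto normPDF atBot (𝓝 0) := by simpa using pow_pdf_tendsto 0

lemma cdf_le_pdf {x : ℝ} (hx : x ≤ -1) : normCDF x ≤ normPDF x := by
  have hm : MonotoneOn (fun x => normPDF x - normCDF x) (Set.Iic (-1)) := by
    refine monotoneOn_of_deriv_nonneg (convex_Iic _) ?_ ?_ ?_
    · exact fun y _ => ((pdf_deriv y).sub (cdf_deriv y)).continuousAt.continuousWithinAt
    · exact fun y _ => ((pdf_deriv y).sub (cdf_deriv y)).differentiableAt.differentiableWithinAt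
    · intro y hy
      rw [interior_Iic] at hy
      have : y < -1 := hy
      have e := ((pdf_deriv y).sub (cdf_deriv y)).deriv
      change 0 ≤ deriv (normPDF - normCDF) y
      rw [e]
      nlinarith [pdf_pos y]
  have hl : Tendsto (fun x => normPDF x - normCDF x) atBot (𝓝 0) := by
    simpa using pdf_tendsto.sub cdf_tendsto
  have := le_of_tendsto hl (by
    filter_upwards [eventually_le_atBot x] with y hy using hm (hy.trans hx) hx hy)
  linarith

lemma pow_cdf_tendsto (k : ℕ) : Tendsto (fun x => x ^ k * normCDF x) atBot (𝓝 0) := by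
  refine squeeze_zero_norm' ?_ (tendsto_zero_iff_norm_tendsto_zero.mp (pow_pdf_tendsto k))
  filter_upwards [eventually_le_atBot (-1)] with x hx
  rw [norm_mul, norm_mul, Real.norm_of_nonneg (cdf_pos x).le, Real.norm_of_nonneg (pdf_pos x).le]
  exact mul_le_mul_of_nonneg_left (cdf_le_pdf hx) (norm_nonneg _)

lemma g1_deriv (x : ℝ) : HasDerivAt g1 (normCDF x) x := by
  have h := ((hasDerivAt_id x).mul (cdf_deriv x)).add (pdf_deriv x)
  refine HasDerivAt.congr_deriv (f := g1) h ?_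
  simp

lemma g2_deriv (x : ℝ) : HasDerivAt g2 (2 * g1 x) x := by
  have h := ((((hasDerivAt_pow 2 x).add_const 1)).mul (cdf_deriv x)).add
    ((hasDerivAt_id x).mul (pdf_deriv x))
  refine HasDerivAt.congr_deriv (f := g2) h ?_
  simp [g1]
  ring

lemma g1_tendsto : Tendsto g1 atBot (𝓝 0) := by
  have := (pow_cdf_tendsto 1).add pdf_tendsto
  have h2 : Tendsto (fun x => x * normCDF x + normPDF x) atBot (𝓝 0) := by simpa using this
  exact h2

lemma g2_tendsto : Tendsto g2 atBot (𝓝 0) := by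
  have := ((pow_cdf_tendsto 2).add cdf_tendsto).add (pow_pdf_tendsto 1)
  simp only [add_zero] at this
  refine this.congr fun x => ?_
  simp [g2]
  ring

lemma g1_mono : StrictMono g1 := (pos_of_deriv g1_deriv cdf_pos g1_tendsto).1
lemma g1_pos (x : ℝ) : 0 < g1 x := (pos_of_deriv g1_deriv cdf_pos g1_tendsto).2 x
lemma g2_pos (x : ℝ) : 0 < g2 x :=
  (pos_of_deriv g2_deriv (fun x => mul_pos two_pos (g1_pos x)) g2_tendsto).2 x

/-- log-concavity of `g1` -/
lemma ineq1 (x : ℝ) : normPDF x * g1 x < normCDF x ^ 2 := by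
  have key : ∀ x, 0 < normCDF x * (normCDF x / normPDF x) - g1 x := by
    refine (pos_of_deriv (f' := fun x => normCDF x * g1 x / normPDF x) (fun x => ?_) (fun x => ?_) ?_).2
    · have h := ((cdf_deriv x).mul ((cdf_deriv x).div (pdf_deriv x) (pdf_pos x).ne')).sub (g1_deriv x)
      refine h.congr_deriv ?_
      have := (pdf_pos x).ne'
      simp only [g1, Pi.div_apply]
      field_simp
      ring
    · exact div_pos (mul_pos (cdf_pos x) (g1_pos x)) (pdf_pos x)
    · have h1 : Tendsto (fun x => normCDF x * (normCDF x / normPDF x)) atBot (𝓝 0) := by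
        refine squeeze_zero' (Eventually.of_forall fun x => ?_) ?_ cdf_tendsto
        · have := cdf_pos x; have := pdf_pos x; positivity
        · filter_upwards [eventually_le_atBot (-1)] with x hx
          have : normCDF x / normPDF x ≤ 1 := (div_le_one (pdf_pos x)).2 (cdf_le_pdf hx)
          nlinarith [cdf_pos x]
      simpa using h1.sub g1_tendsto
  have h := key x
  have hp := pdf_pos x
  have e : normCDF x ^ 2 - normPDF x * g1 x
      = normPDF x * (normCDF x * (normCDF x / normPDF x) - g1 x) := by field_simp
  have := mul_pos hp h
  linarith

lemma ineq2 (x : ℝ) : g2 x * normCDF x < 2 * g1 x ^ 2 := by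
  have key : ∀ x, 0 < g1 x * (g1 x / normCDF x) - g2 x / 2 := by
    refine (pos_of_deriv (f' := fun x => g1 x * (normCDF x ^ 2 - normPDF x * g1 x) / normCDF x ^ 2)
      (fun x => ?_) (fun x => ?_) ?_).2
    · have h := ((g1_deriv x).mul ((g1_deriv x).div (cdf_deriv x) (cdf_pos x).ne')).sub
        ((g2_deriv x).div_const 2)
      refine h.congr_deriv ?_
      have := (cdf_pos x).ne'
      simp only [Pi.div_apply]
      field_simp
      ring
    · exact div_pos (mul_pos (g1_pos x) (sub_pos.2 (ineq1 x))) (pow_pos (cdf_pos x) 2)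
    · have h1 : Tendsto (fun x => g1 x * (g1 x / normCDF x)) atBot (𝓝 0) := by
        refine squeeze_zero' (Eventually.of_forall fun x => ?_) ?_ g1_tendsto
        · have := cdf_pos x; have := g1_pos x; positivity
        · filter_upwards [eventually_le_atBot (-1)] with x hx
          have h3 : g1 x / normCDF x ≤ 1 := by
            rw [div_le_one (cdf_pos x)]
            have := cdf_le_pdf hx
            have := ineq1 x
            by_contra hc
            push Not at hc
            nlinarith [cdf_pos x, pdf_pos x, g1_pos x]
          nlinarith [g1_pos x]
      simpa using h1.sub (g2_tendsto.div_const 2)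
  have h := key x
  have hp := cdf_pos x
  have e : 2 * g1 x ^ 2 - g2 x * normCDF x
      = 2 * (normCDF x * (g1 x * (g1 x / normCDF x) - g2 x / 2)) := by field_simp
  have := mul_pos hp h
  linarith

lemma ineq3 (x : ℝ) : g1 x ^ 2 ≤ g2 x * normCDF x := by
  have e : g2 x * normCDF x - g1 x ^ 2 = normCDF x ^ 2 - normPDF x * g1 x := by
    simp only [g1, g2]; ring
  linarith [ineq1 x]

/-- The ratio `g2 / g1`. -/
noncomputable def G (x : ℝ) : ℝ := g2 x / g1 x

lemma G_pos (x : ℝ) : 0 < G x := div_pos (g2_pos x) (g1_pos x)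

lemma G_deriv (x : ℝ) : HasDerivAt G ((2 * g1 x ^ 2 - g2 x * normCDF x) / g1 x ^ 2) x := by
  have h := (g2_deriv x).div (g1_deriv x) (g1_pos x).ne'
  exact HasDerivAt.congr_deriv (f := G) h (by ring)

lemma G_mono : StrictMono G := strictMono_of_deriv_pos fun x => by
  rw [(G_deriv x).deriv]
  exact div_pos (sub_pos.2 (ineq2 x)) (pow_pos (g1_pos x) 2)

lemma id_sub_G_mono : Monotone (fun x => x - G x) := by
  have hd : ∀ x, HasDerivAt (fun x => x - G x) (1 - (2 * g1 x ^ 2 - g2 x * normCDF x) / g1 x ^ 2) x :=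
    fun x => (hasDerivAt_id x).sub (G_deriv x)
  refine monotone_of_deriv_nonneg (fun x => (hd x).differentiableAt) fun x => ?_
  rw [(hd x).deriv, sub_nonneg, div_le_one (pow_pos (g1_pos x) 2)]
  linarith [ineq3 x]

lemma h_anti : Antitone (fun x => normCDF x / g1 x) := by
  have hd : ∀ x, HasDerivAt (fun x => normCDF x / g1 x)
      ((normPDF x * g1 x - normCDF x * normCDF x) / g1 x ^ 2) x :=
    fun x => (cdf_deriv x).div (g1_deriv x) (g1_pos x).ne'
  refine antitone_of_deriv_nonpos (fun x => (hd x).differentiableAt) fun x => ?_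
  rw [(hd x).deriv]
  exact div_nonpos_of_nonpos_of_nonneg (by nlinarith [ineq1 x]) (sq_nonneg _)

lemma shift_anti {d : ℝ} (hd0 : 0 ≤ d) : Antitone (fun x => g1 (x + d) / g1 x) := by
  have hd : ∀ x, HasDerivAt (fun x => g1 (x + d) / g1 x)
      ((normCDF (x + d) * g1 x - g1 (x + d) * normCDF x) / g1 x ^ 2) x := fun x =>
    ((g1_deriv (x + d)).comp_add_const x d).div (g1_deriv x) (g1_pos x).ne'
  refine antitone_of_deriv_nonpos (fun x => (hd x).differentiableAt) fun x => ?_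
  rw [(hd x).deriv]
  refine div_nonpos_of_nonpos_of_nonneg ?_ (sq_nonneg _)
  have h : normCDF (x + d) / g1 (x + d) ≤ normCDF x / g1 x := h_anti (by linarith)
  rw [div_le_div_iff₀ (g1_pos _) (g1_pos _)] at h
  linarith

lemma gap {a1 a2 b1 b2 : ℝ} (h2 : b2 ≤ a2) (hb : b2 ≤ b1)
    (hr : g1 a1 * g1 b2 = g1 b1 * g1 a2) : b1 - b2 ≤ a1 - a2 := by
  by_contra hc
  push Not at hc
  have h : g1 (a2 + (b1 - b2)) / g1 a2 ≤ g1 (b2 + (b1 - b2)) / g1 b2 :=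
    shift_anti (sub_nonneg.2 hb) h2
  rw [add_sub_cancel, div_le_div_iff₀ (g1_pos _) (g1_pos _)] at h
  have h3 : g1 a1 < g1 (a2 + (b1 - b2)) := g1_mono (by linarith)
  nlinarith [g1_pos b2]

lemma g1_g1inv {t : ℝ} (ht : 0 < t) : g1 (g1inv t) = t := by
  have hc : Continuous g1 := continuous_iff_continuousAt.2 fun x => (g1_deriv x).continuousAt
  have : ∃ x, g1 x = t := by
    obtain ⟨x1, h1⟩ := (g1_tendsto.eventually (gt_mem_nhds ht)).exists
    have h0 := cdf_pos 0
    have hy : 0 ≤ t / normCDF 0 := by positivity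
    have h2 : t ≤ g1 (t / normCDF 0) := by
      have h3 : normCDF 0 ≤ normCDF (t / normCDF 0) := cdf_mono.monotone hy
      have h4 : t / normCDF 0 * normCDF 0 = t := by field_simp
      have := mul_le_mul_of_nonneg_left h3 hy
      have := pdf_pos (t / normCDF 0)
      unfold g1
      linarith
    exact mem_range_of_exists_le_of_exists_ge hc ⟨x1, h1.le⟩ ⟨_, h2⟩
  exact Function.invFun_eq this

/-- The facts about a solution. -/
lemma facts {p m δ r : ℝ} (hp : p ∈ Set.Ioo (0 : ℝ) (1 / 2)) (hm : 0 < m) (hδ : 0 < δ)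
    (hr : r ∈ Set.Ioo (0 : ℝ) 1)
    (h : p * δ * gfn (r / (2 * p * m * δ)) + (1 - p) * δ * gfn (r / (2 * (1 - p) * m * δ))
      = 1 - r ^ 2) :
    ∃ a b : ℝ, g1inv (r / (2 * p * m * δ)) = a ∧ g1inv (r / (2 * (1 - p) * m * δ)) = b ∧
      p * g1 a = r / (2 * m * δ) ∧ (1 - p) * g1 b = r / (2 * m * δ) ∧ b < a ∧
      r * (G a + G b) = 2 * m * (1 - r ^ 2) := by
  obtain ⟨hp0, hp1⟩ := hp
  obtain ⟨hr0, hr1⟩ := hr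
  have hq : 0 < 1 - p := by linarith
  refine ⟨_, _, rfl, rfl, ?_⟩
  unfold gfn at h
  have ha : g1 (g1inv (r / (2 * p * m * δ))) = r / (2 * p * m * δ) := g1_g1inv (by positivity)
  have hb : g1 (g1inv (r / (2 * (1 - p) * m * δ))) = r / (2 * (1 - p) * m * δ) :=
    g1_g1inv (by positivity)
  set a := g1inv (r / (2 * p * m * δ))
  set b := g1inv (r / (2 * (1 - p) * m * δ))
  have ha' : p * g1 a = r / (2 * m * δ) := by rw [ha]; field_simp
  have hb' : (1 - p) * g1 b = r / (2 * m * δ) := by rw [hb]; field_simp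
  refine ⟨ha', hb', ?_, ?_⟩
  · rw [← g1_mono.lt_iff_lt]
    by_contra hc
    push Not at hc
    nlinarith [g1_pos a, g1_pos b]
  · have ea : g2 a = G a * g1 a := by unfold G; have := (g1_pos a).ne'; field_simp
    have eb : g2 b = G b * g1 b := by unfold G; have := (g1_pos b).ne'; field_simp
    rw [← h, ea, eb]
    have e1 : p * δ * (G a * g1 a) = δ * G a * (p * g1 a) := by ring
    have e2 : (1 - p) * δ * (G b * g1 b) = δ * G b * ((1 - p) * g1 b) := by ring
    rw [e1, e2, ha', hb']
    field_simp

/-- common argument for `m` and `δ` -/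
lemma core {p m1 m2 s1 s2 r1 r2 a1 a2 b1 b2 : ℝ} (hp0 : 0 < p) (hp1 : p < 1) (hm1 : 0 < m1)
    (hm : m1 ≤ m2) (hs : s2 < s1) (hs2 : 0 < s2) (hr1 : 0 < r1) (hr1' : r1 < 1) (hr2 : 0 < r2)
    (ha1 : p * g1 a1 = s1) (hb1 : (1 - p) * g1 b1 = s1)
    (ha2 : p * g1 a2 = s2) (hb2 : (1 - p) * g1 b2 = s2) (hab2 : b2 < a2)
    (h1 : r1 * (G a1 + G b1) = 2 * m1 * (1 - r1 ^ 2))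
    (h2 : r2 * (G a2 + G b2) = 2 * m2 * (1 - r2 ^ 2)) :
    r1 * m1 + 1 / 2 * (b1 - a1) < r2 * m2 + 1 / 2 * (b2 - a2) := by
  have ha : a2 < a1 := by
    rw [← g1_mono.lt_iff_lt]
    exact lt_of_mul_lt_mul_left (by linarith) hp0.le
  have hb : b2 < b1 := by
    rw [← g1_mono.lt_iff_lt]
    exact lt_of_mul_lt_mul_left (a := 1 - p) (by linarith) (by linarith)
  have hGa := G_mono ha
  have hGb := G_mono hb
  have hr : r1 < r2 := by
    by_contra hc
    push Not at hc
    have e1 : r2 * (G a2 + G b2) < r1 * (G a1 + G b1) := by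
      have := G_pos a2
      have := G_pos b2
      have : r2 * (G a2 + G b2) ≤ r1 * (G a2 + G b2) :=
        mul_le_mul_of_nonneg_right hc (by linarith)
      have : r1 * (G a2 + G b2) < r1 * (G a1 + G b1) :=
        mul_lt_mul_of_pos_left (by linarith) hr1
      linarith
    have e2 : r2 ^ 2 ≤ r1 ^ 2 := by nlinarith
    have e3 : m1 * (1 - r1 ^ 2) ≤ m2 * (1 - r2 ^ 2) :=
      mul_le_mul hm (by linarith) (by nlinarith) (by linarith)
    linarith
  have hg : b1 - b2 ≤ a1 - a2 := by
    refine gap hab2.le hb.le ?_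
    have hpp : 0 < p * (1 - p) := mul_pos hp0 (by linarith)
    refine mul_left_cancel₀ hpp.ne' ?_
    calc p * (1 - p) * (g1 a1 * g1 b2) = (p * g1 a1) * ((1 - p) * g1 b2) := by ring
      _ = ((1 - p) * g1 b1) * (p * g1 a2) := by rw [ha1, hb1, ha2, hb2]
      _ = _ := by ring
  have : r1 * m1 < r2 * m2 := mul_lt_mul hr hm hm1 hr2.le
  linarith

/-- if `s` does not decrease in `m, δ` we get a contradiction -/
lemma core_s {p m1 m2 s1 s2 r1 r2 a1 a2 b1 b2 : ℝ} (hp0 : 0 < p) (hp1 : p < 1) (hm1 : 0 < m1)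
    (hr1 : 0 < r1) (hr : r1 < r2) (hr2 : r2 < 1) (hs : s1 ≤ s2)
    (hrm : r1 / m1 ≤ r2 / m2) (hm2 : 0 < m2)
    (ha1 : p * g1 a1 = s1) (hb1 : (1 - p) * g1 b1 = s1)
    (ha2 : p * g1 a2 = s2) (hb2 : (1 - p) * g1 b2 = s2)
    (h1 : r1 * (G a1 + G b1) = 2 * m1 * (1 - r1 ^ 2))
    (h2 : r2 * (G a2 + G b2) = 2 * m2 * (1 - r2 ^ 2)) : False := by
  have ha : a1 ≤ a2 := by
    rw [← g1_mono.le_iff_le]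
    exact le_of_mul_le_mul_left (by linarith) hp0
  have hb : b1 ≤ b2 := by
    rw [← g1_mono.le_iff_le]
    exact le_of_mul_le_mul_left (a := 1 - p) (by linarith) (by linarith)
  have hGa := G_mono.monotone ha
  have hGb := G_mono.monotone hb
  have := G_pos a1
  have := G_pos b1
  have e : r1 / m1 * (G a1 + G b1) ≤ r2 / m2 * (G a2 + G b2) :=
    mul_le_mul hrm (by linarith) (by linarith) (by have := hr1.trans hr; positivity)
  have e1 : r1 / m1 * (G a1 + G b1) = 2 * (1 - r1 ^ 2) := by
    field_simp; linarith
  have e2 : r2 / m2 * (G a2 + G b2) = 2 * (1 - r2 ^ 2) := by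
    field_simp; linarith
  nlinarith

lemma core_p {p1 p2 m d r1 r2 a1 a2 b1 b2 : ℝ} (hp0 : 0 < p1) (hp : p1 < p2) (hp1 : p2 < 1)
    (hm : 0 < m) (hd : 0 < d) (hr1 : 0 < r1) (hr2 : 0 < r2)
    (ha1 : p1 * g1 a1 = r1 / d) (hb1 : (1 - p1) * g1 b1 = r1 / d)
    (ha2 : p2 * g1 a2 = r2 / d) (hb2 : (1 - p2) * g1 b2 = r2 / d)
    (h1 : r1 * (G a1 + G b1) = 2 * m * (1 - r1 ^ 2))
    (h2 : r2 * (G a2 + G b2) = 2 * m * (1 - r2 ^ 2)) :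
    r1 * m + 1 / 2 * (b1 - a1) < r2 * m + 1 / 2 * (b2 - a2) := by
  have pa1 := G_pos a1
  have pb1 := G_pos b1
  have pa2 := G_pos a2
  have pb2 := G_pos b2
  rcases le_or_gt r1 r2 with hr | hr
  · have hs : r1 / d ≤ r2 / d := by gcongr
    have hb : b1 < b2 := by
      rw [← g1_mono.lt_iff_lt]
      by_contra hc
      push Not at hc
      nlinarith [g1_pos b1, g1_pos b2]
    have ha : a2 < a1 := by
      by_contra hc
      push Not at hc
      have hGa := G_mono.monotone hc
      have hGb := G_mono hb
      have e : r1 * (G a1 + G b1) < r2 * (G a2 + G b2) :=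
        mul_lt_mul' hr (by linarith) (by linarith) hr2
      have : r1 ^ 2 ≤ r2 ^ 2 := by nlinarith
      nlinarith
    have : r1 * m ≤ r2 * m := by gcongr
    linarith
  · have hs : r2 / d < r1 / d := by gcongr
    have ha : a2 < a1 := by
      rw [← g1_mono.lt_iff_lt]
      by_contra hc
      push Not at hc
      nlinarith [g1_pos a1, g1_pos a2]
    have hGa := G_mono ha
    have hb : b1 ≤ b2 := by
      by_contra hc
      push Not at hc
      have hGb := G_mono hc
      have e : r2 * (G a2 + G b2) < r1 * (G a1 + G b1) :=
        mul_lt_mul'' hr (by linarith) hr2.le (by linarith)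
      have : r2 ^ 2 < r1 ^ 2 := by nlinarith
      nlinarith
    have hbG : b1 - G b1 ≤ b2 - G b2 := id_sub_G_mono hb
    have e1 : 2 * (r1 * m) = 2 * m / r1 - (G a1 + G b1) := by
      field_simp; linarith
    have e2 : 2 * (r2 * m) = 2 * m / r2 - (G a2 + G b2) := by
      field_simp; linarith
    have e3 : 2 * m / r1 < 2 * m / r2 := by gcongr
    linarith

end MMProof

open MMProof

/-- The asymptotic minority-class error
`Err₊*(π,m,δ) = Φ(−ρ*·m − β₀*)` of the unrebalanced max-margin classifier is
strictly decreasing in each of `π` (on `(0,1/2)`), `m`, and `δ`. -/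
theorem stmt_14 (ρstar : ℝ → ℝ → ℝ → ℝ)
    (hρstar : ∀ p m δ : ℝ, p ∈ Set.Ioo (0 : ℝ) 1 → 0 < m → 0 < δ →
      ρstar p m δ ∈ Set.Ioo (0 : ℝ) 1 ∧
      p * δ * gfn (ρstar p m δ / (2 * p * m * δ)) +
          (1 - p) * δ * gfn (ρstar p m δ / (2 * (1 - p) * m * δ)) =
        1 - (ρstar p m δ) ^ 2)
    (β0star : ℝ → ℝ → ℝ → ℝ)
    (hβ0star : ∀ p m δ : ℝ, β0star p m δ =
      (1 / 2) * (g1inv (ρstar p m δ / (2 * (1 - p) * m * δ)) -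
        g1inv (ρstar p m δ / (2 * p * m * δ))))
    (Errplus : ℝ → ℝ → ℝ → ℝ)
    (hErrplus : ∀ p m δ : ℝ, Errplus p m δ =
      normCDF (-(ρstar p m δ * m) - β0star p m δ)) :
    (∀ m δ : ℝ, 0 < m → 0 < δ →
      StrictAntiOn (fun p => Errplus p m δ) (Set.Ioo 0 (1 / 2))) ∧
    (∀ p δ : ℝ, p ∈ Set.Ioo (0 : ℝ) (1 / 2) → 0 < δ →
      StrictAntiOn (fun m => Errplus p m δ) (Set.Ioi 0)) ∧
    (∀ p m : ℝ, p ∈ Set.Ioo (0 : ℝ) (1 / 2) → 0 < m →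
      StrictAntiOn (fun δ => Errplus p m δ) (Set.Ioi 0)) := by
  refine ⟨?_, ?_, ?_⟩
  · intro m δ hm hδ p1 hp1 p2 hp2 hlt
    obtain ⟨hr1, h1⟩ := hρstar p1 m δ ⟨hp1.1, by linarith [hp1.2]⟩ hm hδ
    obtain ⟨hr2, h2⟩ := hρstar p2 m δ ⟨hp2.1, by linarith [hp2.2]⟩ hm hδ
    obtain ⟨a1, b1, ea1, eb1, ha1, hb1, -, k1⟩ := facts hp1 hm hδ hr1 h1
    obtain ⟨a2, b2, ea2, eb2, ha2, hb2, -, k2⟩ := facts hp2 hm hδ hr2 h2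
    simp only [hErrplus, hβ0star, ea1, eb1, ea2, eb2]
    apply cdf_mono
    have := core_p hp1.1 hlt (by linarith [hp2.2]) hm (by positivity) hr1.1 hr2.1 ha1 hb1 ha2 hb2 k1 k2
    linarith
  · intro p δ hp hδ m1 hm1 m2 hm2 hlt
    have hm1 : 0 < m1 := hm1
    have hm2 : 0 < m2 := hm2
    have hp1 : p < 1 := by linarith [hp.2]
    obtain ⟨hr1, h1⟩ := hρstar p m1 δ ⟨hp.1, hp1⟩ hm1 hδ
    obtain ⟨hr2, h2⟩ := hρstar p m2 δ ⟨hp.1, hp1⟩ hm2 hδ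
    obtain ⟨a1, b1, ea1, eb1, ha1, hb1, -, k1⟩ := facts hp hm1 hδ hr1 h1
    obtain ⟨a2, b2, ea2, eb2, ha2, hb2, hab, k2⟩ := facts hp hm2 hδ hr2 h2
    simp only [hErrplus, hβ0star, ea1, eb1, ea2, eb2]
    apply cdf_mono
    have hs : ρstar p m2 δ / (2 * m2 * δ) < ρstar p m1 δ / (2 * m1 * δ) := by
      by_contra hc
      push Not at hc
      have hrm : ρstar p m1 δ / m1 ≤ ρstar p m2 δ / m2 := by
        have := mul_le_mul_of_nonneg_right hc (show 0 ≤ 2 * δ by positivity)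
        refine le_of_eq_of_le ?_ (this.trans_eq ?_) <;> field_simp
      have hr : ρstar p m1 δ < ρstar p m2 δ := by
        rw [div_le_div_iff₀ hm1 hm2] at hrm
        by_contra hcc
        push Not at hcc
        nlinarith [hr1.1]
      exact core_s hp.1 hp1 hm1 hr1.1 hr hr2.2 hc hrm hm2 ha1 hb1 ha2 hb2 k1 k2
    have := core hp.1 hp1 hm1 hlt.le hs (by have := hr2.1; positivity) hr1.1 hr1.2 hr2.1
      ha1 hb1 ha2 hb2 hab k1 k2
    linarith
  · intro p m hp hm δ1 hδ1 δ2 hδ2 hlt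
    have hδ1 : 0 < δ1 := hδ1
    have hδ2 : 0 < δ2 := hδ2
    have hp1 : p < 1 := by linarith [hp.2]
    obtain ⟨hr1, h1⟩ := hρstar p m δ1 ⟨hp.1, hp1⟩ hm hδ1
    obtain ⟨hr2, h2⟩ := hρstar p m δ2 ⟨hp.1, hp1⟩ hm hδ2
    obtain ⟨a1, b1, ea1, eb1, ha1, hb1, -, k1⟩ := facts hp hm hδ1 hr1 h1
    obtain ⟨a2, b2, ea2, eb2, ha2, hb2, hab, k2⟩ := facts hp hm hδ2 hr2 h2
    simp only [hErrplus, hβ0star, ea1, eb1, ea2, eb2]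
    apply cdf_mono
    have hs : ρstar p m δ2 / (2 * m * δ2) < ρstar p m δ1 / (2 * m * δ1) := by
      by_contra hc
      push Not at hc
      have hr : ρstar p m δ1 < ρstar p m δ2 := by
        have := mul_le_mul_of_nonneg_right hc (show 0 ≤ 2 * m by positivity)
        have hrm : ρstar p m δ1 / δ1 ≤ ρstar p m δ2 / δ2 := by
          refine le_of_eq_of_le ?_ (this.trans_eq ?_) <;> field_simp
        rw [div_le_div_iff₀ hδ1 hδ2] at hrm
        by_contra hcc
        push Not at hcc
        nlinarith [hr1.1]
      exact core_s hp.1 hp1 hm hr1.1 hr hr2.2 hc (by gcongr) hm ha1 hb1 ha2 hb2 k1 k2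
    have := core hp.1 hp1 hm le_rfl hs (by have := hr2.1; positivity) hr1.1 hr1.2 hr2.1
      ha1 hb1 ha2 hb2 hab k1 k2
    linarith
end

section
/- Fix κ ∈ ℝ, τ > 0, m > 0, and π ∈ (0,1), and let γ be the standard Gaussian measure on ℝ. For ρ ∈ [−1,1] and β₀ ∈ ℝ define D_κ(ρ, β₀) := π·∫ max(τκ − ρm + t − β₀, 0)² dγ(t) + (1−π)·∫ max(κ − ρm + t + β₀, 0)² dγ(t) (which is strictly positive), and H_κ(ρ, β₀) := (1 − ρ²)/D_κ(ρ, β₀). Then H_κ attains its supremum over [−1,1] × ℝ, every maximizer (ρ*, β₀*) satisfies ρ* ∈ [0,1), and the maximizer is unique. -/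
open MeasureTheory ProbabilityTheory

noncomputable def phiAux (x : ℝ) : ℝ := ∫ t, (max (x + t) 0) ^ 2 ∂(gaussianReal 0 1)

lemma gauss_openPos : (gaussianReal 0 1).IsOpenPosMeasure :=
  (gaussianReal_absolutelyContinuous' 0 (v := 1) one_ne_zero).isOpenPosMeasure

lemma phi_integrable (x : ℝ) :
    Integrable (fun t : ℝ => (max (x + t) 0) ^ 2) (gaussianReal 0 1) := by
  have h2 : MemLp (fun t : ℝ => t) 2 (gaussianReal 0 1) := memLp_id_gaussianReal (μ := 0) (v := 1) 2
  have h3 : MemLp (fun t : ℝ => x + t) 2 (gaussianReal 0 1) := (memLp_const x).add h2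
  refine h3.integrable_sq.mono' (by fun_prop) (Filter.Eventually.of_forall fun t => ?_)
  rw [Real.norm_of_nonneg (by positivity)]
  rcases max_cases (x + t) 0 with h | h <;> rw [h.1]
  nlinarith [sq_nonneg (x + t)]

lemma gauss_integrable_id : Integrable (fun t : ℝ => t) (gaussianReal 0 1) := by
  have h2 : MemLp (fun t : ℝ => t) 1 (gaussianReal 0 1) := memLp_id_gaussianReal (μ := 0) (v := 1) 1
  exact h2.integrable le_rfl

lemma phi_nonneg (x : ℝ) : 0 ≤ phiAux x := integral_nonneg fun t => by positivity

lemma phi_strictMono : StrictMono phiAux := by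
  intro x y hxy
  have := gauss_openPos
  have h : 0 < ∫ t, ((max (y + t) 0) ^ 2 - (max (x + t) 0) ^ 2) ∂(gaussianReal 0 1) := by
    refine integral_pos_of_integrable_nonneg_nonzero (x := 1 - x) (by fun_prop)
      ((phi_integrable y).sub (phi_integrable x)) ?_ ?_
    · intro t
      have : (max (x + t) 0) ^ 2 ≤ (max (y + t) 0) ^ 2 := by gcongr
      simpa using this
    · have h1 : max (y + (1 - x)) 0 = y + (1 - x) := max_eq_left (by linarith)
      have h2 : max (x + (1 - x)) 0 = 1 := by simp
      rw [h1, h2]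
      nlinarith
  rw [integral_sub (phi_integrable y) (phi_integrable x)] at h
  unfold phiAux
  linarith

lemma phi_pos (x : ℝ) : 0 < phiAux x :=
  (phi_nonneg (x - 1)).trans_lt (phi_strictMono (by linarith))

lemma sq_pos_convex (x y a b : ℝ) (ha : 0 < a) (hb : 0 < b) (hab : a + b = 1) :
    (max (a * x + b * y) 0) ^ 2 ≤ a * (max x 0) ^ 2 + b * (max y 0) ^ 2 := by
  have h1 : max (a * x + b * y) 0 ≤ a * max x 0 + b * max y 0 := by
    apply max_le
    · gcongr <;> exact le_max_left _ _
    · positivity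
  have h2 : (max (a * x + b * y) 0) ^ 2 ≤ (a * max x 0 + b * max y 0) ^ 2 := by
    gcongr
  have hb' : b = 1 - a := by linarith
  subst hb'
  nlinarith [mul_nonneg (mul_pos ha hb).le (sq_nonneg (max x 0 - max y 0))]

lemma phi_strictConvex : StrictConvexOn ℝ Set.univ phiAux := by
  refine ⟨convex_univ, ?_⟩
  intro x _ y _ hxy a b ha hb hab
  have := gauss_openPos
  have hI : Integrable (fun t : ℝ => a * (max (x + t) 0) ^ 2 + b * (max (y + t) 0) ^ 2)
      (gaussianReal 0 1) := ((phi_integrable x).const_mul a).add ((phi_integrable y).const_mul b)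
  have h : 0 < ∫ t, ((a * (max (x + t) 0) ^ 2 + b * (max (y + t) 0) ^ 2)
      - (max ((a * x + b * y) + t) 0) ^ 2) ∂(gaussianReal 0 1) := by
    refine integral_pos_of_integrable_nonneg_nonzero (x := |x| + |y|) (by fun_prop)
      (hI.sub (phi_integrable _)) ?_ ?_
    · intro t
      have := sq_pos_convex (x + t) (y + t) a b ha hb hab
      have e : a * (x + t) + b * (y + t) = a * x + b * y + t := by linear_combination t * hab
      rw [e] at this
      simpa using this
    · have h1 : 0 ≤ x + (|x| + |y|) := by linarith [neg_abs_le x, abs_nonneg y]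
      have h2 : 0 ≤ y + (|x| + |y|) := by linarith [neg_abs_le y, abs_nonneg x]
      have e : a * (x + (|x| + |y|)) + b * (y + (|x| + |y|)) = a * x + b * y + (|x| + |y|) := by
        linear_combination (|x| + |y|) * hab
      have h3 : 0 ≤ a * x + b * y + (|x| + |y|) := by rw [← e]; positivity
      rw [max_eq_left h1, max_eq_left h2, max_eq_left h3]
      generalize |x| + |y| = t
      have hb' : b = 1 - a := by linarith
      have : a * (x + t) ^ 2 + b * (y + t) ^ 2 - (a * x + b * y + t) ^ 2 = a * b * (x - y) ^ 2 := by
        subst hb'; ring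
      rw [this]
      have := sub_ne_zero.2 hxy
      positivity
  rw [integral_sub hI (phi_integrable _), integral_add ((phi_integrable x).const_mul a)
    ((phi_integrable y).const_mul b), integral_const_mul, integral_const_mul] at h
  simp only [smul_eq_mul]
  unfold phiAux
  linarith

lemma phi_continuous : Continuous phiAux := by
  rw [← continuousOn_univ]
  exact phi_strictConvex.convexOn.continuousOn isOpen_univ

lemma phi_lower (x : ℝ) : 2 * x - 1 ≤ phiAux x := by
  have hi : Integrable (fun t : ℝ => (2 * x - 1) + 2 * t) (gaussianReal 0 1) :=
    (integrable_const _).add (gauss_integrable_id.const_mul 2)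
  have h : ∫ t, ((2 * x - 1) + 2 * t) ∂(gaussianReal 0 1) ≤ phiAux x := by
    refine integral_mono hi (phi_integrable x) fun t => ?_
    have := le_max_left (x + t) 0
    simp only
    nlinarith [sq_nonneg (max (x + t) 0 - 1)]
  rw [integral_add (integrable_const _) (gauss_integrable_id.const_mul 2),
    integral_const_mul, integral_id_gaussianReal] at h
  simpa using h


/-- The objective `H_κ(ρ,β₀) = (1−ρ²)/D_κ(ρ,β₀)` has a strictly
positive denominator, attains its supremum over `[−1,1] × ℝ`, every maximizer
has `ρ ∈ [0,1)`, and the maximizer is unique. -/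
theorem stmt_17 (κ τ m p : ℝ) (hτ : 0 < τ) (hm : 0 < m)
    (hp : p ∈ Set.Ioo (0 : ℝ) 1)
    (Dk Hk : ℝ → ℝ → ℝ)
    (hDk : ∀ ρ β₀ : ℝ, Dk ρ β₀ =
      p * (∫ t, (max (τ * κ - ρ * m + t - β₀) 0) ^ 2 ∂(gaussianReal 0 1)) +
        (1 - p) * (∫ t, (max (κ - ρ * m + t + β₀) 0) ^ 2 ∂(gaussianReal 0 1)))
    (hHk : ∀ ρ β₀ : ℝ, Hk ρ β₀ = (1 - ρ ^ 2) / Dk ρ β₀) :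
    (∀ ρ β₀ : ℝ, 0 < Dk ρ β₀) ∧
    (∃ q : ℝ × ℝ, q.1 ∈ Set.Icc (-1 : ℝ) 1 ∧
      ∀ r : ℝ × ℝ, r.1 ∈ Set.Icc (-1 : ℝ) 1 → Hk r.1 r.2 ≤ Hk q.1 q.2) ∧
    (∀ q : ℝ × ℝ, q.1 ∈ Set.Icc (-1 : ℝ) 1 →
      (∀ r : ℝ × ℝ, r.1 ∈ Set.Icc (-1 : ℝ) 1 → Hk r.1 r.2 ≤ Hk q.1 q.2) →
      q.1 ∈ Set.Ico (0 : ℝ) 1) ∧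
    (∃! q : ℝ × ℝ, q.1 ∈ Set.Icc (-1 : ℝ) 1 ∧
      ∀ r : ℝ × ℝ, r.1 ∈ Set.Icc (-1 : ℝ) 1 → Hk r.1 r.2 ≤ Hk q.1 q.2) := by
  obtain ⟨hp0, hp1⟩ := hp
  have hq0 : 0 < 1 - p := by linarith
  have hD : ∀ ρ β, Dk ρ β = p * phiAux (τ * κ - ρ * m - β)
      + (1 - p) * phiAux (κ - ρ * m + β) := by
    intro ρ β
    rw [hDk]
    unfold phiAux
    congr 3 <;> (ext t; congr 2; ring)
  have hDpos : ∀ ρ β, 0 < Dk ρ β := fun ρ β => by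
    rw [hD]
    have := phi_pos (τ * κ - ρ * m - β)
    have := phi_pos (κ - ρ * m + β)
    positivity
  have hH0 : 0 < Hk 0 0 := by
    rw [hHk]
    have := hDpos 0 0
    simpa using this
  have hex : ∃ q : ℝ × ℝ, q.1 ∈ Set.Icc (-1 : ℝ) 1 ∧
      ∀ r : ℝ × ℝ, r.1 ∈ Set.Icc (-1 : ℝ) 1 → Hk r.1 r.2 ≤ Hk q.1 q.2 := by
    set B : ℝ := (Dk 0 0 / p + Dk 0 0 / (1 - p)) + 1 + |τ * κ| + |κ| + m with hB
    have e1 : 0 < Dk 0 0 / p := div_pos (hDpos 0 0) hp0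
    have e2 : 0 < Dk 0 0 / (1 - p) := div_pos (hDpos 0 0) hq0
    have a1 := neg_abs_le (τ * κ)
    have a2 := neg_abs_le κ
    have a3 := abs_nonneg (τ * κ)
    have a4 := abs_nonneg κ
    have hB0 : 0 ≤ B := by positivity
    have hc : IsCompact (Set.Icc (-1 : ℝ) 1 ×ˢ Set.Icc (-B) B) := isCompact_Icc.prod isCompact_Icc
    have hcont : Continuous fun q : ℝ × ℝ => Hk q.1 q.2 := by
      simp only [hHk]
      refine Continuous.div (by fun_prop) ?_ fun q => (hDpos _ _).ne'
      simp only [hD]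
      have := phi_continuous
      fun_prop
    have h00 : ((0, 0) : ℝ × ℝ) ∈ Set.Icc (-1 : ℝ) 1 ×ˢ Set.Icc (-B) B :=
      ⟨by constructor <;> norm_num, by constructor <;> simpa using hB0⟩
    obtain ⟨q, hq, hmax⟩ := hc.exists_isMaxOn ⟨_, h00⟩ hcont.continuousOn
    refine ⟨q, hq.1, fun r hr => ?_⟩
    by_cases hr2 : r.2 ∈ Set.Icc (-B) B
    · exact hmax (show r ∈ Set.Icc (-1 : ℝ) 1 ×ˢ Set.Icc (-B) B from ⟨hr, hr2⟩)
    · refine le_trans ?_ (hmax h00)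
      have hDle : Dk 0 0 ≤ Dk r.1 r.2 := by
        have hrm : r.1 * m ≤ m := by nlinarith [hr.2]
        have p1 := phi_pos (τ * κ - r.1 * m - r.2)
        have p2 := phi_pos (κ - r.1 * m + r.2)
        by_cases hlt : -B ≤ r.2
        · have hgt : B < r.2 := by
            by_contra hcon
            exact hr2 ⟨hlt, not_lt.1 hcon⟩
          have l := phi_lower (κ - r.1 * m + r.2)
          have : Dk 0 0 / (1 - p) ≤ phiAux (κ - r.1 * m + r.2) := by linarith
          rw [div_le_iff₀ hq0] at this
          rw [hD r.1 r.2]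
          nlinarith [mul_pos hp0 p1]
        · have l := phi_lower (τ * κ - r.1 * m - r.2)
          have : Dk 0 0 / p ≤ phiAux (τ * κ - r.1 * m - r.2) := by linarith
          rw [div_le_iff₀ hp0] at this
          rw [hD r.1 r.2]
          nlinarith [mul_pos hq0 p2]
      simp only [hHk]
      apply div_le_div₀ (by norm_num) (by nlinarith [sq_nonneg r.1]) (hDpos 0 0) hDle
  refine ⟨hDpos, hex, ?_, ?_⟩
  · intro q hq hmax
    have hpos : 0 < Hk q.1 q.2 := hH0.trans_le (hmax (0, 0) (by constructor <;> norm_num))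
    have hnum : 0 < 1 - q.1 ^ 2 := by
      rw [hHk] at hpos
      exact (div_pos_iff_of_pos_right (hDpos _ _)).1 hpos
    constructor
    · by_contra hneg
      push Not at hneg
      have h := hmax (-q.1, q.2) ⟨by linarith [hq.2], by linarith [hq.1]⟩
      simp only [hHk, neg_sq] at h
      have hlt : Dk (-q.1) q.2 < Dk q.1 q.2 := by
        rw [hD, hD]
        have hqm : q.1 * m < 0 := mul_neg_of_neg_of_pos hneg hm
        have s1 : phiAux (τ * κ - -q.1 * m - q.2) < phiAux (τ * κ - q.1 * m - q.2) :=
          phi_strictMono (by linarith)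
        have s2 : phiAux (κ - -q.1 * m + q.2) < phiAux (κ - q.1 * m + q.2) :=
          phi_strictMono (by linarith)
        nlinarith [mul_lt_mul_of_pos_left s1 hp0, mul_lt_mul_of_pos_left s2 hq0]
      exact absurd h (not_le.2 (div_lt_div_of_pos_left hnum (hDpos _ _) hlt))
    · nlinarith [hq.1]
  · obtain ⟨q, hq, hmax⟩ := hex
    refine ⟨q, ⟨hq, hmax⟩, ?_⟩
    rintro r ⟨hr, hrmax⟩
    by_contra hne
    have heq : Hk r.1 r.2 = Hk q.1 q.2 := le_antisymm (hmax r hr) (hrmax q hq)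
    have hpos : 0 < Hk q.1 q.2 := hH0.trans_le (hmax (0, 0) (by constructor <;> norm_num))
    have hmid := hmax ((1 / 2) * r.1 + (1 / 2) * q.1, (1 / 2) * r.2 + (1 / 2) * q.2)
      ⟨by linarith [hr.1, hq.1], by linarith [hr.2, hq.2]⟩
    simp only at hmid
    generalize hM : Hk q.1 q.2 = M at *
    rw [hHk, div_eq_iff (hDpos _ _).ne'] at heq hM
    rw [hHk, div_le_iff₀ (hDpos _ _)] at hmid
    have hw : ∀ x y, phiAux ((1 / 2) * x + (1 / 2) * y)
        ≤ (1 / 2) * phiAux x + (1 / 2) * phiAux y := fun x y => by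
      simpa using phi_strictConvex.convexOn.2 (Set.mem_univ x) (Set.mem_univ y)
        (by norm_num : (0 : ℝ) ≤ 1 / 2) (by norm_num : (0 : ℝ) ≤ 1 / 2) (by norm_num)
    have hs : ∀ x y, x ≠ y → phiAux ((1 / 2) * x + (1 / 2) * y)
        < (1 / 2) * phiAux x + (1 / 2) * phiAux y := fun x y hxy => by
      simpa using phi_strictConvex.2 (Set.mem_univ x) (Set.mem_univ y) hxy
        (by norm_num : (0 : ℝ) < 1 / 2) (by norm_num : (0 : ℝ) < 1 / 2) (by norm_num)
    have hDlt : Dk ((1 / 2) * r.1 + (1 / 2) * q.1) ((1 / 2) * r.2 + (1 / 2) * q.2)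
        < (1 / 2) * Dk r.1 r.2 + (1 / 2) * Dk q.1 q.2 := by
      simp only [hD]
      have i1 : τ * κ - ((1 / 2) * r.1 + (1 / 2) * q.1) * m - ((1 / 2) * r.2 + (1 / 2) * q.2)
        = (1 / 2) * (τ * κ - r.1 * m - r.2) + (1 / 2) * (τ * κ - q.1 * m - q.2) := by ring
      have i2 : κ - ((1 / 2) * r.1 + (1 / 2) * q.1) * m + ((1 / 2) * r.2 + (1 / 2) * q.2)
        = (1 / 2) * (κ - r.1 * m + r.2) + (1 / 2) * (κ - q.1 * m + q.2) := by ring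
      rw [i1, i2]
      have w1 := hw (τ * κ - r.1 * m - r.2) (τ * κ - q.1 * m - q.2)
      have w2 := hw (κ - r.1 * m + r.2) (κ - q.1 * m + q.2)
      by_cases hu : τ * κ - r.1 * m - r.2 = τ * κ - q.1 * m - q.2
      · have hv : κ - r.1 * m + r.2 ≠ κ - q.1 * m + q.2 := by
          intro hv
          apply hne
          have h2 : r.2 = q.2 := by linarith
          have h1 : r.1 * m = q.1 * m := by linarith
          exact Prod.ext (mul_right_cancel₀ hm.ne' h1) h2
        have s2 := hs _ _ hv
        linarith [mul_le_mul_of_nonneg_left w1 hp0.le, mul_lt_mul_of_pos_left s2 hq0]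
      · have s1 := hs _ _ hu
        linarith [mul_lt_mul_of_pos_left s1 hp0, mul_le_mul_of_nonneg_left w2 hq0.le]
    have := mul_lt_mul_of_pos_left hDlt hpos
    nlinarith [sq_nonneg (r.1 - q.1)]
end

section
/- Let n ≥ 1 and d ≥ 1; let y₁,…,yₙ ∈ {−1,+1} with at least one label of each sign; let μ ∈ ℝ^d with μ ≠ 0 and z₁,…,zₙ ∈ ℝ^d, and set x_i := y_i·μ + z_i. Define g_i := ⟨z_i, μ⟩/‖μ‖₂, let ḡ₊ and z̄₊ (resp. ḡ₋ and z̄₋) be the averages of g_i and z_i over indices with y_i = +1 (resp. y_i = −1), and set g̃ := (ḡ₊ − ḡ₋)/2, z̃ := (z̄₊ − z̄₋)/2, and P⊥z̃ := z̃ − (⟨z̃, μ⟩/‖μ‖₂²)·μ. Then for every β ∈ ℝ^d with ‖β‖₂ ≤ 1 and every β₀ ∈ ℝ: min_{1≤i≤n} y_i(⟨x_i, β⟩ + β₀) ≤ √((‖μ‖₂ + g̃)² + ‖P⊥z̃‖₂²). -/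
open scoped RealInnerProductSpace

/-- Deterministic upper bound on the margin of any linear
classifier on two-component mixture data:
`min_i y_i(⟨x_i,β⟩+β₀) ≤ √((‖μ‖ + g̃)² + ‖P⊥z̃‖²)`. -/
theorem stmt_18
    (n d : ℕ) (hn : 1 ≤ n) (hd : 1 ≤ d)
    (y : Fin n → ℝ) (hy : ∀ i, y i = 1 ∨ y i = -1)
    (hplus : ∃ i, y i = 1) (hminus : ∃ i, y i = -1)
    (μ : EuclideanSpace ℝ (Fin d)) (hμ : μ ≠ 0)
    (z x : Fin n → EuclideanSpace ℝ (Fin d))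
    (hx : ∀ i, x i = y i • μ + z i)
    (g : Fin n → ℝ) (hg : ∀ i, g i = ⟪z i, μ⟫ / ‖μ‖)
    (Iplus Iminus : Finset (Fin n))
    (hIplus : ∀ i, i ∈ Iplus ↔ y i = 1)
    (hIminus : ∀ i, i ∈ Iminus ↔ y i = -1)
    (gbarPlus gbarMinus : ℝ)
    (hgbarPlus : gbarPlus = (∑ i ∈ Iplus, g i) / (Iplus.card : ℝ))
    (hgbarMinus : gbarMinus = (∑ i ∈ Iminus, g i) / (Iminus.card : ℝ))
    (zbarPlus zbarMinus : EuclideanSpace ℝ (Fin d))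
    (hzbarPlus : zbarPlus = ((Iplus.card : ℝ))⁻¹ • ∑ i ∈ Iplus, z i)
    (hzbarMinus : zbarMinus = ((Iminus.card : ℝ))⁻¹ • ∑ i ∈ Iminus, z i)
    (gtil : ℝ) (hgtil : gtil = (gbarPlus - gbarMinus) / 2)
    (ztil : EuclideanSpace ℝ (Fin d))
    (hztil : ztil = (2 : ℝ)⁻¹ • (zbarPlus - zbarMinus))
    (Pz : EuclideanSpace ℝ (Fin d))
    (hPz : Pz = ztil - (⟪ztil, μ⟫ / ‖μ‖ ^ 2) • μ)
    (β : EuclideanSpace ℝ (Fin d)) (hβ : ‖β‖ ≤ 1) (β₀ : ℝ) :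
    (Finset.univ : Finset (Fin n)).inf' ⟨hplus.choose, Finset.mem_univ hplus.choose⟩
        (fun i => y i * (⟪x i, β⟫ + β₀)) ≤
      Real.sqrt ((‖μ‖ + gtil) ^ 2 + ‖Pz‖ ^ 2) := by
  have hN : (0 : ℝ) < ‖μ‖ := norm_pos_iff.mpr hμ
  have hcp : (0 : ℝ) < (Iplus.card : ℝ) := by
    obtain ⟨i, hi⟩ := hplus
    exact_mod_cast Finset.card_pos.mpr ⟨i, (hIplus i).2 hi⟩
  have hcm : (0 : ℝ) < (Iminus.card : ℝ) := by
    obtain ⟨i, hi⟩ := hminus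
    exact_mod_cast Finset.card_pos.mpr ⟨i, (hIminus i).2 hi⟩
  set m := (Finset.univ : Finset (Fin n)).inf' ⟨hplus.choose, Finset.mem_univ hplus.choose⟩
        (fun i => y i * (⟪x i, β⟫ + β₀)) with hm
  have hmi : ∀ i, m ≤ y i * (⟪x i, β⟫ + β₀) := fun i =>
    Finset.inf'_le (fun i => y i * (⟪x i, β⟫ + β₀)) (Finset.mem_univ i)
  have hP : m ≤ ⟪μ, β⟫ + ⟪zbarPlus, β⟫ + β₀ := by
    have h1 : (Iplus.card : ℝ) * m ≤ ∑ i ∈ Iplus, (⟪μ, β⟫ + ⟪z i, β⟫ + β₀) := by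
      rw [← nsmul_eq_mul]
      refine Finset.card_nsmul_le_sum _ _ _ fun i hi => ?_
      have h := hmi i
      rw [hx i, (hIplus i).1 hi, inner_add_left, inner_smul_left] at h
      simp at h
      linarith
    rw [Finset.sum_add_distrib, Finset.sum_add_distrib] at h1
    simp only [Finset.sum_const, nsmul_eq_mul] at h1
    rw [hzbarPlus, real_inner_smul_left, sum_inner]
    refine le_of_mul_le_mul_left (h1.trans (le_of_eq ?_)) hcp
    field_simp
  have hM : m ≤ ⟪μ, β⟫ - ⟪zbarMinus, β⟫ - β₀ := by
    have h1 : (Iminus.card : ℝ) * m ≤ ∑ i ∈ Iminus, (⟪μ, β⟫ - ⟪z i, β⟫ - β₀) := by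
      rw [← nsmul_eq_mul]
      refine Finset.card_nsmul_le_sum _ _ _ fun i hi => ?_
      have h := hmi i
      rw [hx i, (hIminus i).1 hi, inner_add_left, real_inner_smul_left] at h
      linarith
    rw [Finset.sum_sub_distrib, Finset.sum_sub_distrib] at h1
    simp only [Finset.sum_const, nsmul_eq_mul] at h1
    rw [hzbarMinus, real_inner_smul_left, sum_inner]
    refine le_of_mul_le_mul_left (h1.trans (le_of_eq ?_)) hcm
    field_simp
  have hg' : gtil = ⟪ztil, μ⟫ / ‖μ‖ := by
    rw [hgtil, hztil, hgbarPlus, hgbarMinus, hzbarPlus, hzbarMinus]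
    simp only [hg, real_inner_smul_left, inner_sub_left, sum_inner, ← Finset.sum_div]
    field_simp
  have hz : m ≤ ⟪μ + ztil, β⟫ := by
    rw [hztil, inner_add_left, real_inner_smul_left, inner_sub_left]
    linarith
  have hc : ⟪μ + ztil, β⟫ ≤ ‖μ + ztil‖ :=
    (real_inner_le_norm _ _).trans (mul_le_of_le_one_right (norm_nonneg _) hβ)
  refine (hz.trans hc).trans (Real.le_sqrt_of_sq_le (le_of_eq ?_))
  rw [hPz, norm_sub_sq_real, norm_add_sq_real, norm_smul, real_inner_smul_right, hg',
    real_inner_comm ztil μ, mul_pow, Real.norm_eq_abs, sq_abs]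
  field_simp
  ring
end
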